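/- arXiv:2207.02713 — 2 statements merged into one kernel-verified Lean document; each statement's English description precedes it below -/
import Mathlib

section
/- Fix ν > 1/2 and λ with 0 < λ < a, where a = min{1/2, ν − 1/2}, and let h(x) = K_{ν+1}(x)/K_ν(x). There exists a unique B > 0 such that the function U(x) = (ν + 1/2 + λ + √(B + x²))/x satisfies h(x) ≤ U(x) for all x > 0 with equality for at least one x > 0; moreover the equality holds at exactly one point x* > 0, and at this point h′(x*) = U′(x*). Writing B = B(λ) and x* = x*(λ) for this fixed ν, both B(λ) and x*(λ) are decreasing on (0, a), and lim_{λ→0⁺} B(λ) = ν² − 1/4, lim_{λ→a⁻} B(λ) = (ν − 1)² if ν ≥ 1 and lim_{λ→a⁻} B(λ) = 0 if 1/2 < ν < 1, lim_{λ→0⁺} x*(λ) = +∞, lim_{λ→a⁻} x*(λ) = 0. -/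
open Set Filter

/-- The modified Bessel function of the second kind,
`K_ν(x) = ∫_0^∞ e^{-x cosh t} cosh(ν t) dt`. -/
noncomputable def besselK (ν x : ℝ) : ℝ :=
  ∫ t in Set.Ioi (0 : ℝ), Real.exp (-x * Real.cosh t) * Real.cosh (ν * t)

/-- The ratio `h(x) = K_{ν+1}(x)/K_ν(x)`. -/
noncomputable def ratioK (ν : ℝ) : ℝ → ℝ := fun x => besselK (ν + 1) x / besselK ν x

/-- The candidate upper bound `U(x) = (ν + 1/2 + λ + √(B + x²))/x`. -/
noncomputable def upK (ν lam B : ℝ) : ℝ → ℝ := fun x =>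
  (ν + 1 / 2 + lam + Real.sqrt (B + x ^ 2)) / x

/-- `B > 0`, `U` is an upper bound for `h` on `(0,∞)`, and the bound is attained somewhere. -/
def TouchesAboveK (ν lam B : ℝ) : Prop :=
  0 < B ∧ (∀ x > 0, ratioK ν x ≤ upK ν lam B x) ∧ ∃ x > 0, ratioK ν x = upK ν lam B x

/-- The touching point `x*` is unique and the graphs are tangent there. -/
def TangentAboveK (ν lam B xs : ℝ) : Prop :=
  0 < xs ∧ ratioK ν xs = upK ν lam B xs ∧
    (∀ x > 0, ratioK ν x = upK ν lam B x → x = xs) ∧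
    deriv (ratioK ν) xs = deriv (upK ν lam B) xs


lemma bK_cosh_le (ν t : ℝ) (ht : 0 ≤ t) : Real.cosh (ν * t) ≤ Real.exp (|ν| * t) := by
  rw [← Real.cosh_abs, abs_mul, abs_of_nonneg ht, Real.cosh_eq]
  have : Real.exp (-(|ν| * t)) ≤ Real.exp (|ν| * t) := by
    apply Real.exp_le_exp.2
    have : 0 ≤ |ν| * t := by positivity
    linarith
  linarith

lemma bK_bound (ν x t : ℝ) (hx : 0 < x) (ht : 0 ≤ t) :
    Real.exp (-x * Real.cosh t) * Real.cosh (ν * t) ≤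
      Real.exp ((|ν| + 1) ^ 2 / (2 * x)) * Real.exp (-t) := by
  have h1 := bK_cosh_le ν t ht
  have h2 : 1 + t ^ 2 / 2 ≤ Real.cosh t := by
    have e : t = 2 * (t / 2) := by ring
    have h3 : t / 2 ≤ Real.sinh (t / 2) := Real.self_le_sinh_iff.2 (by linarith)
    rw [e, Real.cosh_two_mul, Real.cosh_sq, ← e]
    nlinarith
  calc Real.exp (-x * Real.cosh t) * Real.cosh (ν * t)
      ≤ Real.exp (-x * Real.cosh t) * Real.exp (|ν| * t) := by gcongr
    _ = Real.exp (-x * Real.cosh t + |ν| * t) := by rw [Real.exp_add]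
    _ ≤ Real.exp ((|ν| + 1) ^ 2 / (2 * x) + -t) := by
        apply Real.exp_le_exp.2
        have h3 : (|ν| + 1) * t ≤ (|ν| + 1) ^ 2 / (2 * x) + x * (t ^ 2 / 2) := by
          have : (|ν| + 1) ^ 2 / (2 * x) + x * (t ^ 2 / 2) - (|ν| + 1) * t
              = (|ν| + 1 - x * t) ^ 2 / (2 * x) := by field_simp; ring
          have : 0 ≤ (|ν| + 1 - x * t) ^ 2 / (2 * x) := by positivity
          linarith
        nlinarith
    _ = _ := by rw [Real.exp_add]

lemma bK_int (ν x : ℝ) (hx : 0 < x) :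
    MeasureTheory.IntegrableOn
      (fun t => Real.exp (-x * Real.cosh t) * Real.cosh (ν * t)) (Ioi (0:ℝ)) := by
  have h0 : MeasureTheory.IntegrableOn (fun t : ℝ =>
      Real.exp ((|ν| + 1) ^ 2 / (2 * x)) * Real.exp (-t)) (Ioi (0:ℝ)) :=
    (integrableOn_exp_neg_Ioi 0).const_mul _
  refine MeasureTheory.Integrable.mono' h0 ?_ ?_
  · apply Continuous.aestronglyMeasurable
    fun_prop
  · filter_upwards [MeasureTheory.ae_restrict_mem measurableSet_Ioi] with t ht
    rw [Real.norm_of_nonneg (by positivity)]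
    exact bK_bound ν x t hx (le_of_lt ht)

lemma bK_pos (ν x : ℝ) (hx : 0 < x) : 0 < besselK ν x := by
  unfold besselK
  rw [MeasureTheory.setIntegral_pos_iff_support_of_nonneg_ae]
  · have : Function.support (fun t => Real.exp (-x * Real.cosh t) * Real.cosh (ν * t)) = univ := by
      ext t
      simp only [Function.mem_support, mem_univ, iff_true]
      positivity
    rw [this]; simp
  · exact Eventually.of_forall fun t => by positivity
  · exact bK_int ν x hx

lemma bK_cc (ν t : ℝ) : Real.cosh t * Real.cosh (ν * t) =
    (Real.cosh ((ν + 1) * t) + Real.cosh ((ν - 1) * t)) / 2 := by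
  rw [add_mul, sub_mul, one_mul, Real.cosh_add, Real.cosh_sub]; ring

lemma bK_ss (ν t : ℝ) : Real.sinh t * Real.sinh (ν * t) =
    (Real.cosh ((ν + 1) * t) - Real.cosh ((ν - 1) * t)) / 2 := by
  rw [add_mul, sub_mul, one_mul, Real.cosh_add, Real.cosh_sub]; ring

lemma bK_int_cc (ν x : ℝ) (hx : 0 < x) :
    MeasureTheory.IntegrableOn
      (fun t => Real.cosh t * (Real.exp (-x * Real.cosh t) * Real.cosh (ν * t))) (Ioi (0:ℝ)) := by
  have := ((bK_int (ν + 1) x hx).add (bK_int (ν - 1) x hx)).div_const 2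
  refine this.congr (Eventually.of_forall fun t => ?_)
  have := bK_cc ν t
  simp only [Pi.add_apply]
  linear_combination -Real.exp (-x * Real.cosh t) * this

lemma bK_integral_cc (ν x : ℝ) (hx : 0 < x) :
    ∫ t in Ioi (0:ℝ), Real.cosh t * (Real.exp (-x * Real.cosh t) * Real.cosh (ν * t)) =
      (besselK (ν + 1) x + besselK (ν - 1) x) / 2 := by
  unfold besselK
  rw [← MeasureTheory.integral_add (bK_int (ν + 1) x hx) (bK_int (ν - 1) x hx),
    ← MeasureTheory.integral_div]
  congr 1; ext t
  have := bK_cc ν t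
  linear_combination Real.exp (-x * Real.cosh t) * this

lemma bK_deriv (ν x : ℝ) (hx : 0 < x) :
    HasDerivAt (besselK ν) (-((besselK (ν + 1) x + besselK (ν - 1) x) / 2)) x := by
  have key := hasDerivAt_integral_of_dominated_loc_of_deriv_le
    (μ := MeasureTheory.volume.restrict (Ioi (0:ℝ)))
    (F := fun x t => Real.exp (-x * Real.cosh t) * Real.cosh (ν * t))
    (F' := fun x t => -(Real.cosh t * (Real.exp (-x * Real.cosh t) * Real.cosh (ν * t))))
    (bound := fun t => Real.cosh t * (Real.exp (-(x/2) * Real.cosh t) * Real.cosh (ν * t)))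
    (x₀ := x) (s := Ioi (x/2)) (Ioi_mem_nhds (by linarith)) ?_ (bK_int ν x hx) ?_ ?_
    (bK_int_cc ν (x/2) (by linarith)) ?_
  · have h2 := key.2
    rw [MeasureTheory.integral_neg, bK_integral_cc ν x hx] at h2
    exact h2
  · refine Eventually.of_forall fun y => Continuous.aestronglyMeasurable (by fun_prop)
  · exact Continuous.aestronglyMeasurable (by fun_prop)
  · refine Eventually.of_forall fun t y hy => ?_
    rw [norm_neg, Real.norm_of_nonneg (by positivity)]
    have : 0 < Real.cosh t := Real.cosh_pos t
    have hy' : x / 2 < y := hy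
    gcongr
  · refine Eventually.of_forall fun t y hy => ?_
    have h1 : HasDerivAt (fun y => -y * Real.cosh t) (-1 * Real.cosh t) y :=
      ((hasDerivAt_id y).neg).mul_const _
    have := h1.exp.mul_const (Real.cosh (ν * t))
    exact this.congr_deriv (by ring)

lemma bK_rec (ν x : ℝ) (hx : 0 < x) :
    x * besselK (ν + 1) x = 2 * ν * besselK ν x + x * besselK (ν - 1) x := by
  have hd : ∀ t ∈ Ici (0:ℝ), HasDerivAt (fun t => Real.exp (-x * Real.cosh t) * Real.sinh (ν * t))
      (ν * (Real.exp (-x * Real.cosh t) * Real.cosh (ν * t))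
        - x / 2 * (Real.exp (-x * Real.cosh t) * Real.cosh ((ν + 1) * t)
          - Real.exp (-x * Real.cosh t) * Real.cosh ((ν - 1) * t))) t := by
    intro t _
    have h1 : HasDerivAt (fun t => -x * Real.cosh t) (-x * Real.sinh t) t :=
      (Real.hasDerivAt_cosh t).const_mul _
    have h2 : HasDerivAt (fun t => Real.sinh (ν * t)) (Real.cosh (ν * t) * (ν * 1)) t :=
      ((hasDerivAt_id t).const_mul ν).sinh
    refine (h1.exp.mul h2).congr_deriv ?_
    have := bK_ss ν t
    linear_combination (-x) * Real.exp (-x * Real.cosh t) * this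
  have hlim : Tendsto (fun t => Real.exp (-x * Real.cosh t) * Real.sinh (ν * t)) atTop (nhds 0) := by
    have h0 : Tendsto (fun t : ℝ => Real.exp ((|ν| + 1) ^ 2 / (2 * x)) * Real.exp (-t))
        atTop (nhds 0) := by
      have := (Real.tendsto_exp_neg_atTop_nhds_zero).const_mul
        (Real.exp ((|ν| + 1) ^ 2 / (2 * x)))
      simpa using this
    refine squeeze_zero_norm' ?_ h0
    filter_upwards [eventually_ge_atTop (0:ℝ)] with t ht
    refine le_trans ?_ (bK_bound ν x t hx ht)
    rw [norm_mul, Real.norm_of_nonneg (Real.exp_pos _).le]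
    gcongr
    rw [Real.norm_eq_abs, Real.abs_sinh, ← Real.cosh_abs]
    exact (Real.sinh_lt_cosh _).le
  have i0 := bK_int ν x hx
  have i1 := bK_int (ν + 1) x hx
  have i2 := bK_int (ν - 1) x hx
  have i3 : MeasureTheory.IntegrableOn (fun t => x / 2 *
      (Real.exp (-x * Real.cosh t) * Real.cosh ((ν + 1) * t)
          - Real.exp (-x * Real.cosh t) * Real.cosh ((ν - 1) * t))) (Ioi (0:ℝ)) :=
    (i1.sub i2).const_mul (x/2)
  have key := MeasureTheory.integral_Ioi_of_hasDerivAt_of_tendsto' hd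
    ((i0.const_mul ν).sub i3) hlim
  rw [MeasureTheory.integral_sub (i0.const_mul ν) i3,
    MeasureTheory.integral_const_mul, MeasureTheory.integral_const_mul] at key
  have e := MeasureTheory.integral_sub i1 i2
  simp only [mul_zero, Real.sinh_zero, sub_zero] at key
  unfold besselK
  rw [e] at key
  linarith

lemma bK_conv (ν x : ℝ) (hx : 0 < x) :
    besselK ν x ≤ (besselK (ν + 1) x + besselK (ν - 1) x) / 2 := by
  rw [← bK_integral_cc ν x hx]
  unfold besselK
  refine MeasureTheory.integral_mono (bK_int ν x hx) (bK_int_cc ν x hx) fun t => ?_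
  have h1 : 1 ≤ Real.cosh t := Real.one_le_cosh t
  have h2 : 0 ≤ Real.exp (-x * Real.cosh t) * Real.cosh (ν * t) := by positivity
  simp only
  nlinarith

/-- `y(x) = x K_{ν+1}(x) / K_ν(x)`. -/
noncomputable def yK (ν x : ℝ) : ℝ := x * ratioK ν x

lemma yK_pos (ν x : ℝ) (hx : 0 < x) : 0 < yK ν x := by
  unfold yK ratioK
  have := bK_pos ν x hx
  have := bK_pos (ν + 1) x hx
  positivity

lemma yK_rec (ν x : ℝ) (hx : 0 < x) : yK ν x = 2 * ν + x ^ 2 / yK (ν - 1) x := by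
  have h0 := bK_pos ν x hx
  have h1 := bK_pos (ν - 1) x hx
  have h := bK_rec ν x hx
  unfold yK ratioK
  rw [sub_add_cancel]
  field_simp
  linarith

lemma yK_ge (ν x : ℝ) (hx : 0 < x) : ν + x ≤ yK ν x := by
  have h0 := bK_pos ν x hx
  have h := bK_rec ν x hx
  have h2 := bK_conv ν x hx
  unfold yK ratioK
  rw [← mul_div_assoc, le_div_iff₀ h0]
  nlinarith

lemma ratioK_deriv (ν x : ℝ) (hx : 0 < x) : DifferentiableAt ℝ (ratioK ν) x :=
  (bK_deriv (ν + 1) x hx).differentiableAt.div (bK_deriv ν x hx).differentiableAt (bK_pos ν x hx).ne'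

lemma yK_deriv (ν x : ℝ) (hx : 0 < x) :
    HasDerivAt (yK ν) ((yK ν x ^ 2 - 2 * ν * yK ν x - x ^ 2) / x) x := by
  have h0 := bK_pos ν x hx
  have h := (hasDerivAt_id x).mul ((bK_deriv (ν + 1) x hx).div (bK_deriv ν x hx) h0.ne')
  have r1 := bK_rec ν x hx
  have r2 := bK_rec (ν + 1) x hx
  rw [show ν + 1 - 1 = ν by ring] at r2 h
  refine h.congr_deriv ?_
  unfold yK ratioK
  simp only [id]
  have e2 : besselK (ν + 1 + 1) x = (2 * (ν + 1) * besselK (ν + 1) x + x * besselK ν x) / x := by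
    rw [eq_div_iff hx.ne']; linarith
  have e1 : besselK (ν - 1) x = (x * besselK (ν + 1) x - 2 * ν * besselK ν x) / x := by
    rw [eq_div_iff hx.ne']; linarith
  rw [e1, e2]
  simp only [Pi.div_apply]
  field_simp
  ring

lemma bK_growth (F F' : ℝ → ℝ) (x1 C : ℝ) (hd : ∀ x ≥ x1, HasDerivAt F (F' x) x)
    (h2 : ∀ x ≥ x1, 0 ≤ F x → F x < F' x) (h1 : 0 ≤ F x1)
    (hb : ∀ᶠ x in atTop, F x ≤ C * (1 + x ^ 2)) : False := by
  have hnn : ∀ x ≥ x1, 0 ≤ F x := by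
    intro x hx
    refine image_le_of_deriv_right_lt_deriv_boundary' (f := fun _ => (0:ℝ)) (f' := fun _ => 0)
      (B := F) (B' := F') (a := x1) (b := x) continuousOn_const
      (fun y _ => hasDerivWithinAt_const _ _ _) h1
      (fun y hy => (hd y hy.1).continuousAt.continuousWithinAt)
      (fun y hy => (hd y hy.1).hasDerivWithinAt) ?_ ⟨hx, le_rfl⟩
    intro y hy e
    have := h2 y hy.1 (le_of_eq e)
    linarith
  have hE : ∀ x ≥ x1, HasDerivAt (fun x => F x * Real.exp (-x))
      ((F' x - F x) * Real.exp (-x)) x := by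
    intro x hx
    refine ((hd x hx).mul ((hasDerivAt_id x).neg.exp)).congr_deriv ?_
    simp only [Pi.neg_apply, id]
    ring
  have hm : StrictMonoOn (fun x => F x * Real.exp (-x)) (Ici x1) := by
    apply strictMonoOn_of_deriv_pos (convex_Ici x1)
    · exact fun x hx => (hE x hx).continuousAt.continuousWithinAt
    · intro x hx
      rw [interior_Ici] at hx
      have hx' : x1 ≤ x := le_of_lt hx
      rw [(hE x hx').deriv]
      have := h2 x hx' (hnn x hx')
      have := Real.exp_pos (-x)
      apply mul_pos <;> linarith
  have hc : 0 < F (x1 + 1) * Real.exp (-(x1 + 1)) := by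
    have a1 : F x1 * Real.exp (-x1) < F (x1 + 1) * Real.exp (-(x1 + 1)) :=
      hm (by simp) (by simp) (by linarith)
    have : 0 ≤ F x1 * Real.exp (-x1) := mul_nonneg h1 (Real.exp_pos _).le
    linarith
  have ht : Tendsto (fun x : ℝ => C * (1 + x ^ 2) * Real.exp (-x)) atTop (nhds 0) := by
    have t0 := Real.tendsto_pow_mul_exp_neg_atTop_nhds_zero 0
    have t2 := Real.tendsto_pow_mul_exp_neg_atTop_nhds_zero 2
    have := (t0.add t2).const_mul C
    simp only [add_zero, mul_zero] at this
    refine this.congr fun x => ?_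
    ring
  have : F (x1 + 1) * Real.exp (-(x1 + 1)) ≤ 0 := by
    refine ge_of_tendsto ht ?_
    filter_upwards [hb, eventually_ge_atTop (x1 + 1)] with x hx hx2
    have a1 : F (x1 + 1) * Real.exp (-(x1 + 1)) ≤ F x * Real.exp (-x) :=
      hm.monotoneOn (by simp) (by simp; linarith) hx2
    have := Real.exp_pos (-x)
    nlinarith
  linarith

lemma yK_upper (m : ℝ) : ∀ᶠ x in atTop, yK m x ≤ 2 * m + x ^ 2 := by
  filter_upwards [eventually_ge_atTop (2 - m), eventually_gt_atTop 0] with x hx hx0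
  rw [yK_rec m x hx0]
  have h := yK_ge (m - 1) x hx0
  have h1 : 1 ≤ yK (m - 1) x := by linarith
  have : x ^ 2 / yK (m - 1) x ≤ x ^ 2 := div_le_self (by positivity) h1
  linarith

lemma Y_deriv (μ B x : ℝ) (hB : 0 ≤ B) (hx : 0 < x) :
    HasDerivAt (fun x => μ + Real.sqrt (B + x ^ 2)) (x / Real.sqrt (B + x ^ 2)) x := by
  have h1 : HasDerivAt (fun x : ℝ => B + x ^ 2) (2 * x) x := by
    simpa using (hasDerivAt_pow 2 x).const_add B
  have h2 := (h1.sqrt (by positivity)).const_add μ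
  refine h2.congr_deriv ?_
  have : 0 < Real.sqrt (B + x ^ 2) := by positivity
  field_simp

lemma compare_lower (m μ B x0 : ℝ) (hB : 0 ≤ B) (hμ : m ≤ μ) (hx0 : 0 < x0)
    (h : ∀ x ≥ x0, μ ^ 2 + 2 * μ * Real.sqrt (B + x ^ 2) + B - 2 * m * μ
      - 2 * m * Real.sqrt (B + x ^ 2) < x ^ 2 / Real.sqrt (B + x ^ 2)) :
    ∀ x ≥ x0, μ + Real.sqrt (B + x ^ 2) < yK m x := by
  intro x1 hx1
  by_contra hcon
  push Not at hcon
  refine bK_growth (fun x => (μ + Real.sqrt (B + x ^ 2)) - yK m x)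
    (fun x => x / Real.sqrt (B + x ^ 2) - (yK m x ^ 2 - 2 * m * yK m x - x ^ 2) / x) x1
    (|μ| + 1 + B) ?_ ?_ (by linarith) ?_
  · intro x hx
    have : 0 < x := by linarith
    exact (Y_deriv μ B x hB this).sub (yK_deriv m x this)
  · intro x hx hF
    have hx' : 0 < x := by linarith
    have hr : 0 < Real.sqrt (B + x ^ 2) := by positivity
    have hr2 : Real.sqrt (B + x ^ 2) ^ 2 = B + x ^ 2 := Real.sq_sqrt (by positivity)
    have hh := h x (by linarith)
    have hg := yK_ge m x hx'
    set r := Real.sqrt (B + x ^ 2)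
    set y := yK m x
    have e : x / r - (y ^ 2 - 2 * m * y - x ^ 2) / x
        = (x ^ 2 / r - (y ^ 2 - 2 * m * y - x ^ 2)) / x := by field_simp
    rw [e, lt_div_iff₀ hx']
    nlinarith [mul_nonneg hF (by linarith : 0 ≤ (μ + r - m) + (y - m - x))]
  · filter_upwards [eventually_gt_atTop 0] with x hx
    have := yK_pos m x hx
    have h3 : Real.sqrt (B + x ^ 2) ≤ 1 + B + x ^ 2 := by
      rw [Real.sqrt_le_left (by positivity)]
      nlinarith [sq_nonneg x]
    have := le_abs_self μ
    have := abs_nonneg μ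
    nlinarith [mul_nonneg (add_nonneg this hB) (sq_nonneg x)]

lemma compare_upper (m μ B x0 : ℝ) (hB : 0 ≤ B) (hμ : m ≤ μ) (hx0 : 0 < x0)
    (h : ∀ x ≥ x0, x ^ 2 / Real.sqrt (B + x ^ 2) < μ ^ 2 + 2 * μ * Real.sqrt (B + x ^ 2) + B
      - 2 * m * μ - 2 * m * Real.sqrt (B + x ^ 2)) :
    ∀ x ≥ x0, yK m x < μ + Real.sqrt (B + x ^ 2) := by
  intro x1 hx1
  by_contra hcon
  push Not at hcon
  refine bK_growth (fun x => yK m x - (μ + Real.sqrt (B + x ^ 2)))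
    (fun x => (yK m x ^ 2 - 2 * m * yK m x - x ^ 2) / x - x / Real.sqrt (B + x ^ 2)) x1
    (2 * |m| + |μ| + 1) ?_ ?_ (by linarith) ?_
  · intro x hx
    have : 0 < x := by linarith
    exact (yK_deriv m x this).sub (Y_deriv μ B x hB this)
  · intro x hx hF
    have hx' : 0 < x := by linarith
    have hr : 0 < Real.sqrt (B + x ^ 2) := by positivity
    have hr2 : Real.sqrt (B + x ^ 2) ^ 2 = B + x ^ 2 := Real.sq_sqrt (by positivity)
    have hh := h x (by linarith)
    have hg := yK_ge m x hx'
    set r := Real.sqrt (B + x ^ 2)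
    set y := yK m x
    have e : (y ^ 2 - 2 * m * y - x ^ 2) / x - x / r
        = ((y ^ 2 - 2 * m * y - x ^ 2) - x ^ 2 / r) / x := by field_simp
    rw [e, lt_div_iff₀ hx']
    nlinarith [mul_nonneg hF (by linarith : 0 ≤ (μ + r - m) + (y - m - x))]
  · filter_upwards [yK_upper m] with x hx
    have h3 : 0 ≤ Real.sqrt (B + x ^ 2) := by positivity
    have := neg_abs_le μ
    have := le_abs_self m
    have a1 := abs_nonneg μ
    have a2 := abs_nonneg m
    nlinarith [mul_nonneg (add_nonneg (add_nonneg a1 a2) a2) (sq_nonneg x)]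

/-- `y` is increasing: Turán type inequality. -/
lemma yK_turan (m x : ℝ) (hx : 0 < x) : 0 < yK m x ^ 2 - 2 * m * yK m x - x ^ 2 := by
  have h := compare_lower m m (m ^ 2) x (by positivity) le_rfl hx (fun z hz => by
    have hz' : 0 < z := by linarith
    have : 0 < z ^ 2 / Real.sqrt (m ^ 2 + z ^ 2) := by positivity
    linarith) x le_rfl
  have hr2 : Real.sqrt (m ^ 2 + x ^ 2) ^ 2 = m ^ 2 + x ^ 2 := Real.sq_sqrt (by positivity)
  have hr : 0 < Real.sqrt (m ^ 2 + x ^ 2) := by positivity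
  nlinarith

lemma yK_cont (m : ℝ) : ContinuousOn (yK m) (Ioi 0) :=
  fun x hx => (yK_deriv m x hx).continuousAt.continuousWithinAt

lemma yK_mono (m : ℝ) : StrictMonoOn (yK m) (Ioi 0) := by
  apply strictMonoOn_of_deriv_pos (convex_Ioi 0) (yK_cont m)
  intro x hx
  rw [interior_Ioi] at hx
  rw [(yK_deriv m x hx).deriv]
  exact div_pos (yK_turan m x hx) hx

/-- Upper bound for `y` near zero. -/
lemma yK_near_zero (m κ : ℝ) (h0 : 0 < κ) (hm : 2 * m < κ) :
    ∃ δ > 0, ∀ x, 0 < x → x < δ → yK m x < κ := by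
  by_contra hcon
  push Not at hcon
  have hge : ∀ x > 0, κ ≤ yK m x := by
    intro x hx
    obtain ⟨z, hz0, hz1, hz2⟩ := hcon x hx
    exact hz2.trans ((yK_mono m).monotoneOn hz0 hx hz1.le)
  set c := κ ^ 2 - 2 * m * κ with hc
  have hcpos : 0 < c := by rw [hc]; nlinarith
  set δ := Real.sqrt (c / 2) with hδ
  have hδ0 : 0 < δ := by positivity
  have hδ2 : δ ^ 2 = c / 2 := Real.sq_sqrt (by positivity)
  have hmono : MonotoneOn (fun x => yK m x - c / 2 * Real.log x) (Ioc 0 δ) := by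
    apply monotoneOn_of_deriv_nonneg (convex_Ioc 0 δ)
    · intro x hx
      have : ContinuousAt (fun x => yK m x - c / 2 * Real.log x) x :=
        (yK_deriv m x hx.1).continuousAt.sub
          (((Real.hasDerivAt_log hx.1.ne').const_mul _).continuousAt)
      exact this.continuousWithinAt
    · intro x hx
      rw [interior_Ioc] at hx
      exact ((yK_deriv m x hx.1).sub ((Real.hasDerivAt_log hx.1.ne').const_mul
        (c / 2))).differentiableAt.differentiableWithinAt
    · intro x hx
      rw [interior_Ioc] at hx
      have hd := ((yK_deriv m x hx.1).sub ((Real.hasDerivAt_log hx.1.ne').const_mul (c / 2)))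
      have : deriv (fun x => yK m x - c / 2 * Real.log x) x = _ := hd.deriv
      rw [this]
      have e : (yK m x ^ 2 - 2 * m * yK m x - x ^ 2) / x - c / 2 * x⁻¹
        = (yK m x ^ 2 - 2 * m * yK m x - x ^ 2 - c / 2) / x := by field_simp
      rw [e]
      have hk := hge x hx.1
      have hx2 : x ^ 2 ≤ c / 2 := by rw [← hδ2]; have := hx.1; have := hx.2; gcongr
      apply div_nonneg _ hx.1.le
      have : 0 ≤ (yK m x - κ) * (yK m x + κ - 2 * m) := by
        apply mul_nonneg <;> linarith
      nlinarith
  have ht : Tendsto (fun x => yK m δ - c / 2 * Real.log δ + c / 2 * Real.log x)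
      (nhdsWithin 0 (Ioi 0)) atBot :=
    tendsto_atBot_add_const_left _ _
      ((Real.tendsto_log_nhdsGT_zero).const_mul_atBot (by positivity))
  have hev := ht.eventually (eventually_lt_atBot 0)
  have hev2 : ∀ᶠ x in nhdsWithin (0:ℝ) (Ioi 0), x ∈ Ioc 0 δ := Ioc_mem_nhdsGT hδ0
  obtain ⟨x, hx1, hx2⟩ := (hev.and hev2).exists
  have h3 := hmono hx2 ⟨hδ0, le_rfl⟩ hx2.2
  have h4 := yK_pos m x hx2.1
  simp only at h3
  linarith

lemma yK_gt (ν x : ℝ) (hx : 0 < x) : 2 * ν < yK ν x := by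
  rw [yK_rec ν x hx]
  have := yK_pos (ν - 1) x hx
  have : 0 < x ^ 2 / yK (ν - 1) x := by positivity
  linarith

/-- The function whose maximum over `x > 0` is the best `B`. -/
noncomputable def gK (ν lam x : ℝ) : ℝ := (yK ν x - (ν + 1 / 2 + lam)) ^ 2 - x ^ 2

lemma ratioK_eq (ν x : ℝ) (hx : 0 < x) : ratioK ν x = yK ν x / x := by
  unfold yK; field_simp

lemma yK_le_iff (ν lam B x : ℝ) (hl : lam < ν - 1 / 2) (hx : 0 < x) :
    yK ν x ≤ ν + 1 / 2 + lam + Real.sqrt (B + x ^ 2) ↔ gK ν lam x ≤ B := by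
  have h := yK_gt ν x hx
  have hw : 0 < yK ν x - (ν + 1 / 2 + lam) := by linarith
  rw [← sub_le_iff_le_add', Real.le_sqrt' hw]
  unfold gK
  constructor <;> intro h <;> linarith

lemma yK_eq_iff (ν lam B x : ℝ) (hB : 0 < B) (hl : lam < ν - 1 / 2) (hx : 0 < x) :
    yK ν x = ν + 1 / 2 + lam + Real.sqrt (B + x ^ 2) ↔ gK ν lam x = B := by
  have h := yK_gt ν x hx
  have hw : 0 < yK ν x - (ν + 1 / 2 + lam) := by linarith
  rw [← sub_eq_iff_eq_add', eq_comm, Real.sqrt_eq_iff_eq_sq (by positivity) hw.le]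
  unfold gK
  constructor <;> intro h <;> linarith

lemma ratioK_le_iff (ν lam B x : ℝ) (hl : lam < ν - 1 / 2) (hx : 0 < x) :
    ratioK ν x ≤ upK ν lam B x ↔ gK ν lam x ≤ B := by
  rw [ratioK_eq ν x hx, ← yK_le_iff ν lam B x hl hx]
  unfold upK
  exact div_le_div_iff_of_pos_right hx

lemma ratioK_eq_iff (ν lam B x : ℝ) (hB : 0 < B) (hl : lam < ν - 1 / 2) (hx : 0 < x) :
    ratioK ν x = upK ν lam B x ↔ gK ν lam x = B := by
  rw [ratioK_eq ν x hx, ← yK_eq_iff ν lam B x hB hl hx]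
  unfold upK
  exact div_left_inj' hx.ne'

lemma touches_iff (ν lam B : ℝ) (hl : lam < ν - 1 / 2) :
    TouchesAboveK ν lam B ↔ 0 < B ∧ (∀ x > 0, gK ν lam x ≤ B) ∧ ∃ x > 0, gK ν lam x = B := by
  unfold TouchesAboveK
  refine and_congr_right fun hB => and_congr ?_ ?_
  · exact forall₂_congr fun x hx => ratioK_le_iff ν lam B x hl hx
  · exact exists_congr fun x => and_congr_right fun hx => ratioK_eq_iff ν lam B x hB hl hx

lemma gK_cont (ν lam : ℝ) : ContinuousOn (gK ν lam) (Ioi 0) := by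
  unfold gK
  exact (((yK_cont ν).sub continuousOn_const).pow 2).sub (continuousOn_id.pow 2)

lemma gK_exists_max (ν lam : ℝ) (h0 : 0 < lam) (h1 : lam < 1 / 2) (h2 : lam < ν - 1 / 2) :
    ∃ x > 0, (ν - 1 / 2 - lam) ^ 2 < gK ν lam x ∧ ∀ z > 0, gK ν lam z ≤ gK ν lam x := by
  obtain ⟨b, hb⟩ : ∃ b, b = ν - 1 / 2 - lam := ⟨_, rfl⟩
  have hb0 : 0 < b := by linarith
  rw [← hb]
  -- a point with a large value
  obtain ⟨xh, hxh0, hxh⟩ : ∃ x > 0, b ^ 2 < gK ν lam x := by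
    obtain ⟨κ, hκ1, hκ2⟩ : ∃ κ, max (ν - 1) 0 < κ ∧ κ < b :=
      exists_between (max_lt (by linarith) hb0)
    have hκ3 := (le_max_left _ _).trans_lt hκ1
    have hκ0 := (le_max_right _ _).trans_lt hκ1
    obtain ⟨δ, hδ, hd⟩ := yK_near_zero (ν - 1) (2 * κ) (by linarith) (by linarith)
    have hx : 0 < δ / 2 := by linarith
    refine ⟨δ / 2, hx, ?_⟩
    have hp := hd (δ / 2) hx (by linarith)
    have hp0 := yK_pos (ν - 1) (δ / 2) hx
    have hr := yK_rec ν (δ / 2) hx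
    generalize δ / 2 = x at *
    have hq : x ^ 2 / (2 * b) < x ^ 2 / yK (ν - 1) x := by
      apply div_lt_div_of_pos_left <;> first | positivity | linarith
    have hqe : x ^ 2 = 2 * b * (x ^ 2 / (2 * b)) := by field_simp
    have hq0 : 0 < x ^ 2 / (2 * b) := by positivity
    unfold gK
    rw [hr]
    have e : 2 * ν + x ^ 2 / yK (ν - 1) x - (ν + 1 / 2 + lam) = b + x ^ 2 / yK (ν - 1) x := by
      rw [hb]; ring
    rw [e]
    nlinarith
  -- near zero
  obtain ⟨δ, hδ, hd⟩ : ∃ δ > 0, ∀ x, 0 < x → x < δ → gK ν lam x < gK ν lam xh := by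
    set c := Real.sqrt (gK ν lam xh) with hc
    have hc2 : c ^ 2 = gK ν lam xh := Real.sq_sqrt (by nlinarith)
    have hcb : b < c := Real.lt_sqrt_of_sq_lt hxh
    obtain ⟨δ, hδ, hd⟩ := yK_near_zero ν (2 * ν + (c - b)) (by linarith) (by linarith)
    refine ⟨δ, hδ, fun x hx hx2 => ?_⟩
    have h3 := hd x hx hx2
    have h4 := yK_gt ν x hx
    rw [← hc2]
    unfold gK
    have : (yK ν x - (ν + 1 / 2 + lam)) ^ 2 < c ^ 2 := by
      apply pow_lt_pow_left₀ _ (by linarith) (by norm_num)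
      linarith
    nlinarith [sq_nonneg x]
  -- near infinity
  obtain ⟨T, hT⟩ : ∃ T, ∀ x ≥ T, gK ν lam x < gK ν lam xh := by
    obtain ⟨μ, hμ⟩ : ∃ μ, μ = ν + 1 / 2 + lam := ⟨_, rfl⟩
    obtain ⟨T, hTdef⟩ : ∃ T, T = |μ ^ 2 - 2 * ν * μ + b ^ 2| / (2 * lam) + 1 := ⟨_, rfl⟩
    have hT0 : 0 < T := by rw [hTdef]; positivity
    have := compare_upper ν μ (b ^ 2) T (by positivity) (by linarith) hT0 (fun x hx => by
      have hx0 : 0 < x := by linarith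
      have hr : 0 < Real.sqrt (b ^ 2 + x ^ 2) := by positivity
      have hr2 : Real.sqrt (b ^ 2 + x ^ 2) ^ 2 = b ^ 2 + x ^ 2 := Real.sq_sqrt (by positivity)
      have hrx : x ≤ Real.sqrt (b ^ 2 + x ^ 2) := by
        apply Real.le_sqrt_of_sq_le; nlinarith
      generalize Real.sqrt (b ^ 2 + x ^ 2) = r at *
      have h3 : x ^ 2 / r ≤ r := by
        rw [div_le_iff₀ hr]; nlinarith
      have h4 : |μ ^ 2 - 2 * ν * μ + b ^ 2| < 2 * lam * r := by
        have : |μ ^ 2 - 2 * ν * μ + b ^ 2| / (2 * lam) < r := by linarith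
        rw [div_lt_iff₀ (by linarith)] at this
        linarith
      have h5 := neg_abs_le (μ ^ 2 - 2 * ν * μ + b ^ 2)
      have h6 : 2 * μ * r - 2 * ν * r = r + 2 * lam * r := by rw [hμ]; ring
      linarith)
    refine ⟨T, fun x hx => lt_of_le_of_lt ?_ hxh⟩
    have h5 := this x hx
    rw [hμ] at h5
    exact (yK_le_iff ν lam (b ^ 2) x h2 (by linarith)).1 h5.le
  have hsub : Icc (min δ xh) (max T xh) ⊆ Ioi 0 := fun x hx =>
    lt_of_lt_of_le (lt_min hδ hxh0) hx.1
  have hmem : xh ∈ Icc (min δ xh) (max T xh) := ⟨min_le_right _ _, le_max_right _ _⟩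
  obtain ⟨x, hx, hmax⟩ := isCompact_Icc.exists_isMaxOn ⟨xh, hmem⟩ ((gK_cont ν lam).mono hsub)
  have hge : gK ν lam xh ≤ gK ν lam x := hmax hmem
  refine ⟨x, hsub hx, by linarith, fun z hz => ?_⟩
  by_cases hz1 : z < δ
  · exact (hd z hz hz1).le.trans hge
  by_cases hz2 : T ≤ z
  · exact (hT z hz2).le.trans hge
  · push Not at hz1 hz2
    exact hmax ⟨(min_le_left _ _).trans hz1, hz2.le.trans (le_max_left _ _)⟩

lemma D_deriv (ν lam B x : ℝ) (hB : 0 < B) (hx : 0 < x) :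
    HasDerivAt (fun z => yK ν z - (ν + 1 / 2 + lam + Real.sqrt (B + z ^ 2)))
      ((yK ν x ^ 2 - 2 * ν * yK ν x - x ^ 2) / x - x / Real.sqrt (B + x ^ 2)) x :=
  (yK_deriv ν x hx).sub (Y_deriv (ν + 1 / 2 + lam) B x hB.le hx)

lemma crit_eq (ν lam B x : ℝ) (hB : 0 < B) (hl : lam < ν - 1 / 2) (hx : 0 < x)
    (hle : ∀ z > 0, gK ν lam z ≤ B) (he : gK ν lam x = B) :
    2 * lam * Real.sqrt (B + x ^ 2) ^ 2 + B
      = (ν ^ 2 - (1 / 2 + lam) ^ 2 - B) * Real.sqrt (B + x ^ 2) := by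
  have hloc : IsLocalMax (fun z => yK ν z - (ν + 1 / 2 + lam + Real.sqrt (B + z ^ 2))) x := by
    filter_upwards [Ioi_mem_nhds hx] with z hz
    have h1 := (yK_le_iff ν lam B z hl hz).2 (hle z hz)
    have h2 := (yK_eq_iff ν lam B x hB hl hx).2 he
    linarith
  have h := hloc.hasDerivAt_eq_zero (D_deriv ν lam B x hB hx)
  have h2 := (yK_eq_iff ν lam B x hB hl hx).2 he
  have hr : 0 < Real.sqrt (B + x ^ 2) := by positivity
  have hr2 : Real.sqrt (B + x ^ 2) ^ 2 = B + x ^ 2 := Real.sq_sqrt (by positivity)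
  rw [h2] at h
  generalize Real.sqrt (B + x ^ 2) = r at *
  rw [div_sub_div _ _ hx.ne' hr.ne', div_eq_zero_iff] at h
  rcases h with h | h
  · have hx2 : x ^ 2 = r ^ 2 - B := by linarith
    have hxx : x * x = r ^ 2 - B := by linarith
    rw [hx2, hxx] at h
    linear_combination h
  · exact absurd h (by positivity)

lemma crit_unique (ν lam B x1 x2 : ℝ) (hB : 0 < B) (h0 : 0 < lam) (hl : lam < ν - 1 / 2)
    (hx1 : 0 < x1) (h12 : x1 < x2) (hle : ∀ z > 0, gK ν lam z ≤ B)
    (he1 : gK ν lam x1 = B) (he2 : gK ν lam x2 = B) : False := by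
  have hx2 : 0 < x2 := by linarith
  have q1 := crit_eq ν lam B x1 hB hl hx1 hle he1
  have q2 := crit_eq ν lam B x2 hB hl hx2 hle he2
  have hanti : StrictAntiOn (fun z => yK ν z - (ν + 1 / 2 + lam + Real.sqrt (B + z ^ 2)))
      (Icc x1 x2) := by
    apply strictAntiOn_of_deriv_neg (convex_Icc x1 x2)
    · intro x hx
      have : 0 < x := lt_of_lt_of_le hx1 hx.1
      exact (D_deriv ν lam B x hB this).continuousAt.continuousWithinAt
    · intro x hx
      rw [interior_Icc] at hx
      have hx0 : 0 < x := hx1.trans hx.1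
      rw [(D_deriv ν lam B x hB hx0).deriv]
      have hD := (yK_le_iff ν lam B x hl hx0).2 (hle x hx0)
      have hg := yK_ge ν x hx0
      have hr : 0 < Real.sqrt (B + x ^ 2) := by positivity
      have hr2 : Real.sqrt (B + x ^ 2) ^ 2 = B + x ^ 2 := Real.sq_sqrt (by positivity)
      have hra : Real.sqrt (B + x1 ^ 2) < Real.sqrt (B + x ^ 2) := by
        apply Real.sqrt_lt_sqrt (by positivity)
        have := hx.1
        gcongr
      have hrb : Real.sqrt (B + x ^ 2) < Real.sqrt (B + x2 ^ 2) := by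
        apply Real.sqrt_lt_sqrt (by positivity)
        have := hx.2
        gcongr
      generalize Real.sqrt (B + x ^ 2) = r at *
      generalize Real.sqrt (B + x1 ^ 2) = r1 at *
      generalize Real.sqrt (B + x2 ^ 2) = r2 at *
      have hP : ν ^ 2 - (1 / 2 + lam) ^ 2 - B = 2 * lam * (r1 + r2) := by
        have : (r2 - r1) * (ν ^ 2 - (1 / 2 + lam) ^ 2 - B - 2 * lam * (r1 + r2)) = 0 := by
          linear_combination q1 - q2
        rcases mul_eq_zero.1 this with h | h <;> linarith
      have hBe : B = 2 * lam * r1 * r2 := by rw [hP] at q1; linear_combination q1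
      have hQ : 2 * lam * r ^ 2 + B < (ν ^ 2 - (1 / 2 + lam) ^ 2 - B) * r := by
        rw [hP]
        have : 0 < 2 * lam * ((r - r1) * (r2 - r)) :=
          mul_pos (by linarith) (mul_pos (by linarith) (by linarith))
        nlinarith
      rw [div_sub_div _ _ hx0.ne' hr.ne']
      apply div_neg_of_neg_of_pos _ (by positivity)
      generalize yK ν x = y at *
      have hY : y ^ 2 - 2 * ν * y ≤ (ν + 1 / 2 + lam + r) ^ 2 - 2 * ν * (ν + 1 / 2 + lam + r) := by
        have : 0 ≤ (ν + 1 / 2 + lam + r - y) * (ν + 1 / 2 + lam + r - ν + (y - ν)) := by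
          apply mul_nonneg <;> linarith
        nlinarith
      have hx2' : x ^ 2 = r ^ 2 - B := by linarith
      have hxx : x * x = r ^ 2 - B := by linarith
      rw [hx2', hxx]
      have := mul_le_mul_of_nonneg_right hY hr.le
      nlinarith
  have := hanti ⟨le_rfl, h12.le⟩ ⟨h12.le, le_rfl⟩ h12
  have e1 := (yK_eq_iff ν lam B x1 hB hl hx1).2 he1
  have e2 := (yK_eq_iff ν lam B x2 hB hl hx2).2 he2
  simp only at this
  linarith

lemma tangent_of (ν lam B x : ℝ) (hB : 0 < B) (h0 : 0 < lam) (hl : lam < ν - 1 / 2)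
    (hx : 0 < x) (hle : ∀ z > 0, gK ν lam z ≤ B) (he : gK ν lam x = B) :
    TangentAboveK ν lam B x := by
  refine ⟨hx, (ratioK_eq_iff ν lam B x hB hl hx).2 he, fun z hz hez => ?_, ?_⟩
  · have hez' := (ratioK_eq_iff ν lam B z hB hl hz).1 hez
    rcases lt_trichotomy z x with h | h | h
    · exact (crit_unique ν lam B z x hB h0 hl hz h hle hez' he).elim
    · exact h
    · exact (crit_unique ν lam B x z hB h0 hl hx h hle he hez').elim
  · have hloc : IsLocalMax (ratioK ν - upK ν lam B) x := by
      filter_upwards [Ioi_mem_nhds hx] with z hz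
      have h1 := (ratioK_le_iff ν lam B z hl hz).2 (hle z hz)
      have h2 := (ratioK_eq_iff ν lam B x hB hl hx).2 he
      simp only [Pi.sub_apply]
      linarith
    have h := hloc.deriv_eq_zero
    have hU : DifferentiableAt ℝ (upK ν lam B) x :=
      ((Y_deriv (ν + 1 / 2 + lam) B x hB.le hx).div (hasDerivAt_id x) hx.ne').differentiableAt
    rw [deriv_sub (ratioK_deriv ν x hx) hU] at h
    linarith

lemma crit_eq2 (ν lam B x : ℝ) (hB : 0 < B) (hl : lam < ν - 1 / 2) (hx : 0 < x)
    (hle : ∀ z > 0, gK ν lam z ≤ B) (he : gK ν lam x = B) :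
    (yK ν x ^ 2 - 2 * ν * yK ν x - x ^ 2) * (yK ν x - (ν + 1 / 2 + lam)) = x ^ 2 := by
  have h := crit_eq ν lam B x hB hl hx hle he
  have h2 := (yK_eq_iff ν lam B x hB hl hx).2 he
  have hr2 : Real.sqrt (B + x ^ 2) ^ 2 = B + x ^ 2 := Real.sq_sqrt (by positivity)
  rw [h2]
  generalize Real.sqrt (B + x ^ 2) = r at *
  have hx2 : x ^ 2 = r ^ 2 - B := by linarith
  rw [hx2]
  linear_combination h

lemma B_upper (ν lam B x : ℝ) (hB : 0 < B) (h0 : 0 < lam) (hl : lam < ν - 1 / 2) (hx : 0 < x)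
    (hle : ∀ z > 0, gK ν lam z ≤ B) (he : gK ν lam x = B) :
    B ≤ (Real.sqrt (ν ^ 2 - (1 / 2 - lam) ^ 2) - Real.sqrt (2 * lam)) ^ 2 := by
  have h := crit_eq ν lam B x hB hl hx hle he
  have hr : 0 < Real.sqrt (B + x ^ 2) := by positivity
  generalize Real.sqrt (B + x ^ 2) = r at *
  have b1 : Real.sqrt B ^ 2 = B := Real.sq_sqrt hB.le
  have l1 : Real.sqrt (2 * lam) ^ 2 = 2 * lam := Real.sq_sqrt (by linarith)
  have b0 := Real.sqrt_nonneg B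
  have l0 := Real.sqrt_nonneg (2 * lam)
  have hle2 : Real.sqrt B + Real.sqrt (2 * lam) ≤ Real.sqrt (ν ^ 2 - (1 / 2 - lam) ^ 2) := by
    apply Real.le_sqrt_of_sq_le
    generalize Real.sqrt B = β at *
    generalize Real.sqrt (2 * lam) = l at *
    have : 2 * l * β ≤ ν ^ 2 - (1 / 2 + lam) ^ 2 - B := by
      refine le_of_mul_le_mul_right ?_ hr
      rw [← h, ← l1, ← b1]
      nlinarith [sq_nonneg (l * r - β)]
    nlinarith
  rw [← b1]
  apply pow_le_pow_left₀ b0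
  linarith

lemma gK_lt (ν l1 l2 x : ℝ) (h12 : l1 < l2) (hl : l2 < ν - 1 / 2) (hx : 0 < x) :
    gK ν l2 x < gK ν l1 x := by
  have h := yK_gt ν x hx
  unfold gK
  nlinarith

lemma gK_zero_large (ν c : ℝ) (hν : 1 / 2 < ν) (hc : c < ν ^ 2 - 1 / 4) :
    ∃ x > 0, c < gK ν 0 x := by
  obtain ⟨B, hB1, hB2⟩ : ∃ B, max c 0 < B ∧ B < ν ^ 2 - 1 / 4 :=
    exists_between (max_lt hc (by nlinarith))
  have hcB := (le_max_left _ _).trans_lt hB1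
  have hB0 := (le_max_right _ _).trans_lt hB1
  obtain ⟨e, he⟩ : ∃ e, e = ν ^ 2 - 1 / 4 - B := ⟨_, rfl⟩
  have he0 : 0 < e := by linarith
  obtain ⟨x0, hx0⟩ : ∃ x0, x0 = B / e + 1 := ⟨_, rfl⟩
  have hx00 : 0 < x0 := by rw [hx0]; positivity
  have := compare_lower ν (ν + 1 / 2) B x0 hB0.le (by linarith) hx00 (fun x hx => by
      have hxp : 0 < x := by linarith
      have hr : 0 < Real.sqrt (B + x ^ 2) := by positivity
      have hr2 : Real.sqrt (B + x ^ 2) ^ 2 = B + x ^ 2 := Real.sq_sqrt (by positivity)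
      have hrx : x ≤ Real.sqrt (B + x ^ 2) := by
        apply Real.le_sqrt_of_sq_le; nlinarith
      generalize Real.sqrt (B + x ^ 2) = r at *
      have h4 : B < r * e := by
        rw [← div_lt_iff₀ he0]; linarith
      rw [lt_div_iff₀ hr]
      nlinarith) x0 le_rfl
  refine ⟨x0, hx00, ?_⟩
  have hr2 : Real.sqrt (B + x0 ^ 2) ^ 2 = B + x0 ^ 2 := Real.sq_sqrt (by positivity)
  have hr := Real.sqrt_nonneg (B + x0 ^ 2)
  unfold gK
  have : Real.sqrt (B + x0 ^ 2) ^ 2 < (yK ν x0 - (ν + 1 / 2 + 0)) ^ 2 := by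
    apply pow_lt_pow_left₀ _ hr (by norm_num)
    linarith
  linarith

theorem best_upper_bound_K (ν a : ℝ) (hν : 1 / 2 < ν) (ha : a = min (1 / 2) (ν - 1 / 2)) :
    (∀ lam ∈ Ioo (0 : ℝ) a,
      (∃! B : ℝ, TouchesAboveK ν lam B) ∧
      (∀ B : ℝ, TouchesAboveK ν lam B → ∃ xs : ℝ, TangentAboveK ν lam B xs)) ∧
    (∃ B X : ℝ → ℝ,
      (∀ lam ∈ Ioo (0 : ℝ) a,
        TouchesAboveK ν lam (B lam) ∧ TangentAboveK ν lam (B lam) (X lam)) ∧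
      StrictAntiOn B (Ioo (0 : ℝ) a) ∧
      StrictAntiOn X (Ioo (0 : ℝ) a) ∧
      Tendsto B (nhdsWithin 0 (Ioi 0)) (nhds (ν ^ 2 - 1 / 4)) ∧
      Tendsto B (nhdsWithin a (Iio a)) (nhds (if 1 ≤ ν then (ν - 1) ^ 2 else 0)) ∧
      Tendsto X (nhdsWithin 0 (Ioi 0)) atTop ∧
      Tendsto X (nhdsWithin a (Iio a)) (nhds 0)) := by
  have ha1 : a ≤ 1 / 2 := by rw [ha]; exact min_le_left _ _
  have ha2 : a ≤ ν - 1 / 2 := by rw [ha]; exact min_le_right _ _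
  have ha0 : 0 < a := by rw [ha]; exact lt_min (by norm_num) (by linarith)
  have hl2 : ∀ lam ∈ Ioo (0 : ℝ) a, lam < ν - 1 / 2 := fun lam h => h.2.trans_le ha2
  have key : ∀ lam ∈ Ioo (0 : ℝ) a, ∃ x : ℝ, 0 < x ∧
      (ν - 1 / 2 - lam) ^ 2 < gK ν lam x ∧ ∀ z > 0, gK ν lam z ≤ gK ν lam x := by
    intro lam h
    obtain ⟨x, h1, h2⟩ := gK_exists_max ν lam h.1 (h.2.trans_le ha1) (hl2 lam h)
    exact ⟨x, h1, h2⟩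
  choose! X hX0 hXb hXm using key
  obtain ⟨B, hBdef⟩ : ∃ B : ℝ → ℝ, ∀ lam, gK ν lam (X lam) = B lam := ⟨_, fun _ => rfl⟩
  have hBm : ∀ lam ∈ Ioo (0 : ℝ) a, ∀ z > 0, gK ν lam z ≤ B lam := by
    intro lam h; rw [← hBdef]; exact hXm lam h
  have hBb : ∀ lam ∈ Ioo (0 : ℝ) a, (ν - 1 / 2 - lam) ^ 2 < B lam := by
    intro lam h; rw [← hBdef]; exact hXb lam h
  have hB0 : ∀ lam ∈ Ioo (0 : ℝ) a, 0 < B lam := fun lam h =>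
    lt_of_le_of_lt (sq_nonneg _) (hBb lam h)
  have hT : ∀ lam ∈ Ioo (0 : ℝ) a, TouchesAboveK ν lam (B lam) := fun lam h =>
    (touches_iff ν lam (B lam) (hl2 lam h)).2 ⟨hB0 lam h, hBm lam h, X lam, hX0 lam h, hBdef lam⟩
  have hcrit := fun lam (h : lam ∈ Ioo (0 : ℝ) a) =>
    crit_eq ν lam (B lam) (X lam) (hB0 lam h) (hl2 lam h) (hX0 lam h) (hBm lam h) (hBdef lam)
  have hup := fun lam (h : lam ∈ Ioo (0 : ℝ) a) =>
    B_upper ν lam (B lam) (X lam) (hB0 lam h) h.1 (hl2 lam h) (hX0 lam h) (hBm lam h) (hBdef lam)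
  have ev0 : ∀ᶠ lam in nhdsWithin (0:ℝ) (Ioi 0), lam ∈ Ioo (0:ℝ) a := Ioo_mem_nhdsGT ha0
  have eva : ∀ᶠ lam in nhdsWithin a (Iio a), lam ∈ Ioo (0:ℝ) a := Ioo_mem_nhdsLT ha0
  have hucont : Continuous (fun l : ℝ =>
      (Real.sqrt (ν ^ 2 - (1 / 2 - l) ^ 2) - Real.sqrt (2 * l)) ^ 2) := by fun_prop
  have hBlim0 : Tendsto B (nhdsWithin 0 (Ioi 0)) (nhds (ν ^ 2 - 1 / 4)) := by
    rw [tendsto_order]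
    constructor
    · intro c hc
      obtain ⟨x, hx, hxc⟩ := gK_zero_large ν c hν hc
      have hcont : Continuous (fun l => gK ν l x) := by unfold gK; fun_prop
      have h1 : ∀ᶠ l in nhdsWithin (0:ℝ) (Ioi 0), c < gK ν l x :=
        (hcont.tendsto 0).mono_left nhdsWithin_le_nhds |>.eventually (lt_mem_nhds hxc)
      filter_upwards [h1, ev0] with l h1 h2
      exact h1.trans_le (hBm l h2 x hx)
    · intro c hc
      have hv : (Real.sqrt (ν ^ 2 - (1 / 2 - 0) ^ 2) - Real.sqrt (2 * 0)) ^ 2 < c := by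
        rw [mul_zero, Real.sqrt_zero, sub_zero, Real.sq_sqrt (by nlinarith)]
        linarith
      have h1 := ((hucont.tendsto 0).mono_left (nhdsWithin_le_nhds (s := Ioi 0))).eventually
        (gt_mem_nhds hv)
      filter_upwards [h1, ev0] with l h1 h2
      exact (hup l h2).trans_lt h1
  have hBlima : Tendsto B (nhdsWithin a (Iio a)) (nhds (if 1 ≤ ν then (ν - 1) ^ 2 else 0)) := by
    have hlcont : Continuous (fun l : ℝ => (ν - 1 / 2 - l) ^ 2) := by fun_prop
    have t1 := (hlcont.tendsto a).mono_left (nhdsWithin_le_nhds (s := Iio a))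
    have t2 := (hucont.tendsto a).mono_left (nhdsWithin_le_nhds (s := Iio a))
    have e1 : (ν - 1 / 2 - a) ^ 2 = if 1 ≤ ν then (ν - 1) ^ 2 else 0 := by
      split_ifs with h
      · rw [ha, min_eq_left (by linarith)]; ring
      · rw [ha, min_eq_right (by linarith)]; ring
    have e2 : (Real.sqrt (ν ^ 2 - (1 / 2 - a) ^ 2) - Real.sqrt (2 * a)) ^ 2
        = if 1 ≤ ν then (ν - 1) ^ 2 else 0 := by
      split_ifs with h
      · rw [ha, min_eq_left (by linarith), sub_self, show (2:ℝ) * (1 / 2) = 1 by norm_num,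
          Real.sqrt_one, zero_pow (by norm_num), sub_zero, Real.sqrt_sq (by linarith)]
      · rw [ha, min_eq_right (by linarith),
          show ν ^ 2 - (1 / 2 - (ν - 1 / 2)) ^ 2 = 2 * (ν - 1 / 2) by ring]
        ring
    rw [e1] at t1
    rw [e2] at t2
    refine tendsto_of_tendsto_of_tendsto_of_le_of_le' t1 t2 ?_ ?_
    · filter_upwards [eva] with l hl using (hBb l hl).le
    · filter_upwards [eva] with l hl using hup l hl
  refine ⟨fun lam hlam => ⟨⟨B lam, hT lam hlam, ?_⟩, ?_⟩, B, X, ?_, ?_, ?_, hBlim0, hBlima, ?_, ?_⟩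
  · intro B' hB'
    obtain ⟨h1, h2, x, h3, h4⟩ := (touches_iff ν lam B' (hl2 lam hlam)).1 hB'
    apply le_antisymm
    · rw [← h4]; exact hBm lam hlam x h3
    · rw [← hBdef]; exact h2 _ (hX0 lam hlam)
  · intro B' hB'
    obtain ⟨h1, h2, x, h3, h4⟩ := (touches_iff ν lam B' (hl2 lam hlam)).1 hB'
    exact ⟨x, tangent_of ν lam B' x h1 hlam.1 (hl2 lam hlam) h3 h2 h4⟩
  · exact fun lam h => ⟨hT lam h, tangent_of ν lam (B lam) (X lam) (hB0 lam h) h.1 (hl2 lam h)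
      (hX0 lam h) (hBm lam h) (hBdef lam)⟩
  · intro l1 h1 l2 h2 h12
    have := gK_lt ν l1 l2 (X l2) h12 (hl2 l2 h2) (hX0 l2 h2)
    rw [hBdef] at this
    exact this.trans_le (hBm l1 h1 _ (hX0 l2 h2))
  · intro l1 h1 l2 h2 h12
    by_contra hcon
    push Not at hcon
    rcases hcon.lt_or_eq with h | h
    · have hy := yK_mono ν (hX0 l1 h1) (hX0 l2 h2) h
      have g1 := hXm l1 h1 _ (hX0 l2 h2)
      have g2 := hXm l2 h2 _ (hX0 l1 h1)
      unfold gK at g1 g2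
      nlinarith [mul_pos (sub_pos.2 h12) (sub_pos.2 hy)]
    · have c1 := crit_eq2 ν l1 (B l1) (X l1) (hB0 l1 h1) (hl2 l1 h1) (hX0 l1 h1) (hBm l1 h1)
        (hBdef l1)
      have c2 := crit_eq2 ν l2 (B l2) (X l2) (hB0 l2 h2) (hl2 l2 h2) (hX0 l2 h2) (hBm l2 h2)
        (hBdef l2)
      have ht := yK_turan ν (X l1) (hX0 l1 h1)
      rw [← h] at c2
      nlinarith [mul_pos ht (sub_pos.2 h12)]
  · rw [tendsto_atTop]
    intro M
    obtain ⟨R, hR⟩ : ∃ R, R = Real.sqrt (ν ^ 2 + M ^ 2) := ⟨_, rfl⟩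
    have hR0 : 0 ≤ R := by rw [hR]; positivity
    have tid : Tendsto (fun l : ℝ => l) (nhdsWithin 0 (Ioi 0)) (nhds 0) :=
      tendsto_id.mono_left nhdsWithin_le_nhds
    have hP : Tendsto (fun l => (ν ^ 2 - (1 / 2 + l) ^ 2 - B l) * R - B l)
        (nhdsWithin 0 (Ioi 0))
        (nhds ((ν ^ 2 - (1 / 2 + 0) ^ 2 - (ν ^ 2 - 1 / 4)) * R - (ν ^ 2 - 1 / 4))) :=
      (((tendsto_const_nhds.sub ((tendsto_const_nhds.add tid).pow 2)).sub hBlim0).mul_const R).sub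
        hBlim0
    have hv : (ν ^ 2 - (1 / 2 + 0) ^ 2 - (ν ^ 2 - 1 / 4)) * R - (ν ^ 2 - 1 / 4) < 0 := by
      nlinarith
    have e1 := hP.eventually (gt_mem_nhds hv)
    have e2 := hBlim0.eventually (gt_mem_nhds (show ν ^ 2 - 1 / 4 < ν ^ 2 by linarith))
    filter_upwards [e1, e2, ev0] with l h1 h2 h3
    by_contra hcon
    push Not at hcon
    have hc := hcrit l h3
    have hX := hX0 l h3
    have hBl := hB0 l h3
    have hr : 0 < Real.sqrt (B l + X l ^ 2) := by positivity
    have hrR : Real.sqrt (B l + X l ^ 2) ≤ R := by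
      rw [hR]; apply Real.sqrt_le_sqrt; gcongr
    have hl0 := h3.1
    generalize Real.sqrt (B l + X l ^ 2) = r at *
    have hPr : B l ≤ (ν ^ 2 - (1 / 2 + l) ^ 2 - B l) * r := by
      rw [← hc]
      have : 0 < 2 * l * r ^ 2 := by positivity
      linarith
    have hP0 : 0 < ν ^ 2 - (1 / 2 + l) ^ 2 - B l := by
      by_contra hn
      push Not at hn
      nlinarith
    nlinarith
  · obtain ⟨L, hL⟩ : ∃ L : ℝ, L = if 1 ≤ ν then (ν - 1) ^ 2 else 0 := ⟨_, rfl⟩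
    rw [← hL] at hBlima
    have tid : Tendsto (fun l : ℝ => l) (nhdsWithin a (Iio a)) (nhds a) :=
      tendsto_id.mono_left nhdsWithin_le_nhds
    have hP : Tendsto (fun l => ν ^ 2 - (1 / 2 + l) ^ 2 - B l) (nhdsWithin a (Iio a))
        (nhds (ν ^ 2 - (1 / 2 + a) ^ 2 - L)) :=
      (tendsto_const_nhds.sub ((tendsto_const_nhds.add tid).pow 2)).sub hBlima
    have hf : Tendsto (fun l => Real.sqrt ((((ν ^ 2 - (1 / 2 + l) ^ 2 - B l) +
          Real.sqrt ((ν ^ 2 - (1 / 2 + l) ^ 2 - B l) ^ 2 - 8 * l * B l)) / (4 * l)) ^ 2 - B l))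
        (nhdsWithin a (Iio a))
        (nhds (Real.sqrt ((((ν ^ 2 - (1 / 2 + a) ^ 2 - L) +
          Real.sqrt ((ν ^ 2 - (1 / 2 + a) ^ 2 - L) ^ 2 - 8 * a * L)) / (4 * a)) ^ 2 - L))) :=
      ((((hP.add ((hP.pow 2).sub ((tid.const_mul 8).mul hBlima)).sqrt).div (tid.const_mul 4)
        (by positivity)).pow 2).sub hBlima).sqrt
    have hval : Real.sqrt ((((ν ^ 2 - (1 / 2 + a) ^ 2 - L) +
          Real.sqrt ((ν ^ 2 - (1 / 2 + a) ^ 2 - L) ^ 2 - 8 * a * L)) / (4 * a)) ^ 2 - L) = 0 := by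
      rw [hL]
      split_ifs with h
      · rw [ha, min_eq_left (by linarith)]
        have : (ν ^ 2 - (1 / 2 + 1 / 2) ^ 2 - (ν - 1) ^ 2) ^ 2 - 8 * (1 / 2) * (ν - 1) ^ 2 = 0 := by
          ring
        rw [this, Real.sqrt_zero, ← Real.sqrt_zero]
        congr 1
        ring
      · rw [ha, min_eq_right (by linarith)]
        have : ν ^ 2 - (1 / 2 + (ν - 1 / 2)) ^ 2 - 0 = 0 := by ring
        rw [this]
        simp
    rw [hval] at hf
    refine squeeze_zero' ?_ ?_ hf
    · filter_upwards [eva] with l hl using (hX0 l hl).le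
    · filter_upwards [eva] with l hl
      apply Real.le_sqrt_of_sq_le
      have hc := hcrit l hl
      have hX := hX0 l hl
      have hBl := hB0 l hl
      have hr : 0 < Real.sqrt (B l + X l ^ 2) := by positivity
      have hr2 : Real.sqrt (B l + X l ^ 2) ^ 2 = B l + X l ^ 2 := Real.sq_sqrt (by positivity)
      have hl0 := hl.1
      generalize Real.sqrt (B l + X l ^ 2) = r at *
      generalize ν ^ 2 - (1 / 2 + l) ^ 2 - B l = P at *
      have h1 : 4 * l * r - P ≤ Real.sqrt (P ^ 2 - 8 * l * B l) := by
        apply Real.le_sqrt_of_sq_le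
        apply le_of_eq
        linear_combination 8 * l * hc
      have h2 : r ≤ (P + Real.sqrt (P ^ 2 - 8 * l * B l)) / (4 * l) := by
        rw [le_div_iff₀ (by linarith)]
        linarith
      have h3 := pow_le_pow_left₀ hr.le h2 2
      linarith
end

section
/- Fix ν ≥ 0 and λ ∈ (1/2, 2), and let h(x) = I_{ν−1}(x)/I_ν(x). There exists a unique C > 0 such that the function U(x) = (ν − λ + √((ν + λ)² + C·x²))/x satisfies h(x) ≤ U(x) for all x > 0 with equality for at least one x > 0; moreover the equality holds at exactly one point x* > 0, and at this point h′(x*) = U′(x*). Writing C = C(λ) and x* = x*(λ) for this fixed ν, the function C(λ) is increasing and x*(λ) is decreasing on (1/2, 2), and lim_{λ→1/2⁺} C(λ) = 1, lim_{λ→2⁻} C(λ) = (ν + 2)/(ν + 1), lim_{λ→1/2⁺} x*(λ) = +∞, lim_{λ→2⁻} x*(λ) = 0. -/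
open Set Filter

/-- The modified Bessel function of the first kind,
`I_ν(x) = ∑_{k=0}^∞ (x/2)^{2k+ν} / (k! Γ(k+ν+1))`
(here `1/Γ` vanishes at nonpositive integer arguments, since `Real.Gamma` is `0` there). -/
noncomputable def besselI (ν x : ℝ) : ℝ :=
  ∑' k : ℕ, (x / 2) ^ (2 * (k : ℝ) + ν) / ((Nat.factorial k : ℝ) * Real.Gamma ((k : ℝ) + ν + 1))

/-- The ratio `h(x) = I_{ν-1}(x)/I_ν(x)`. -/
noncomputable def ratioI (ν : ℝ) : ℝ → ℝ := fun x => besselI (ν - 1) x / besselI ν x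

/-- The candidate upper bound `U(x) = (ν - λ + √((ν + λ)² + C x²))/x`. -/
noncomputable def upI (ν lam C : ℝ) : ℝ → ℝ := fun x =>
  (ν - lam + Real.sqrt ((ν + lam) ^ 2 + C * x ^ 2)) / x

/-- `C > 0`, `U` is an upper bound for `h` on `(0,∞)`, and the bound is attained somewhere. -/
def TouchesAboveI (ν lam C : ℝ) : Prop :=
  0 < C ∧ (∀ x > 0, ratioI ν x ≤ upI ν lam C x) ∧ ∃ x > 0, ratioI ν x = upI ν lam C x

/-- The touching point `x*` is unique and the graphs are tangent there. -/
def TangentAboveI (ν lam C xs : ℝ) : Prop :=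
  0 < xs ∧ ratioI ν xs = upI ν lam C xs ∧
    (∀ x > 0, ratioI ν x = upI ν lam C x → x = xs) ∧
    deriv (ratioI ν) xs = deriv (upI ν lam C) xs



lemma first_zero (f f' : ℝ → ℝ) (hd : ∀ t > 0, HasDerivAt f (f' t) t)
    (h0 : ∀ᶠ t in nhdsWithin 0 (Ioi 0), 0 < f t)
    (hz : ∀ t > 0, f t = 0 → 0 < f' t) : ∀ t > 0, 0 < f t := by
  intro t0 ht0
  by_contra hneg
  push Not at hneg
  obtain ⟨δ, hδ, hδ'⟩ := mem_nhdsGT_iff_exists_Ioo_subset.1 h0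
  have hδ : (0:ℝ) < δ := hδ
  set S : Set ℝ := {t | t ∈ Icc (δ / 2) t0 ∧ f t ≤ 0} with hS
  have ht0δ : δ ≤ t0 := by
    by_contra h
    push Not at h
    have : 0 < f t0 := hδ' ⟨ht0, h⟩
    linarith
  have hne : S.Nonempty := ⟨t0, ⟨by linarith, le_rfl⟩, hneg⟩
  have hcont : ContinuousOn f (Icc (δ / 2) t0) := fun t ht =>
    (hd t (by have := ht.1; show (0:ℝ) < t; linarith)).continuousAt.continuousWithinAt
  have hclosed : IsClosed S := by
    have := hcont.preimage_isClosed_of_isClosed isClosed_Icc (isClosed_Iic (a := (0:ℝ)))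
    exact this
  have hbdd : BddBelow S := ⟨δ / 2, fun t ht => ht.1.1⟩
  have hT := hclosed.csInf_mem hne hbdd
  set T := sInf S
  have hTpos : 0 < T := by have := hT.1.1; linarith
  have hTδ : δ ≤ T := by
    by_contra h
    push Not at h
    have : 0 < f T := hδ' ⟨hTpos, h⟩
    linarith [hT.2]
  have hbefore : ∀ t, δ / 2 ≤ t → t < T → 0 < f t := by
    intro t h1 h2
    by_contra h
    push Not at h
    have : T ≤ t := csInf_le hbdd ⟨⟨h1, by linarith [hT.1.2]⟩, h⟩
    linarith
  have hev : ∀ᶠ t in nhdsWithin T (Iio T), 0 < f t := by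
    have : Ioo (δ / 2) T ∈ nhdsWithin T (Iio T) := Ioo_mem_nhdsLT (by linarith)
    filter_upwards [this] with t ht using hbefore t ht.1.le ht.2
  have hfT : f T = 0 := by
    apply le_antisymm hT.2
    have hc : Tendsto f (nhdsWithin T (Iio T)) (nhds (f T)) :=
      (hd T hTpos).continuousAt.continuousWithinAt
    exact ge_of_tendsto hc (hev.mono fun _ h => h.le)
  have hder := hz T hTpos hfT
  have hs := (hasDerivAt_iff_tendsto_slope.1 (hd T hTpos)).mono_left
    (nhdsWithin_mono T (fun x (hx : x < T) => ne_of_lt hx) : nhdsWithin T (Iio T) ≤ _)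
  have : f' T ≤ 0 := by
    refine le_of_tendsto hs ?_
    filter_upwards [hev, self_mem_nhdsWithin] with t h1 h2
    have h2 : t < T := h2
    rw [slope_def_field, hfT]
    apply div_nonpos_of_nonneg_of_nonpos <;> linarith
  linarith

structure Sys (n : ℝ) (a b c : ℝ → ℝ) : Prop where
  hn : 1 ≤ n
  pa : ∀ t > 0, 0 < a t
  pb : ∀ t > 0, 0 < b t
  da : ∀ t > 0, HasDerivAt a (a t * (b t - a t) / 2) t
  db : ∀ t > 0, HasDerivAt b (b t * (c t - b t) / 2) t
  i1 : ∀ t > 0, 1 = 2 * n * a t + t * a t * b t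
  i2 : ∀ t > 0, 1 = 2 * (n + 1) * b t + t * b t * c t
  la : Tendsto a (nhdsWithin 0 (Ioi 0)) (nhds (1 / (2 * n)))
  lb : Tendsto b (nhdsWithin 0 (Ioi 0)) (nhds (1 / (2 * (n + 1))))
  lc : Tendsto c (nhdsWithin 0 (Ioi 0)) (nhds (1 / (2 * (n + 2))))

namespace Sys
variable {n : ℝ} {a b c : ℝ → ℝ}

lemma dpos (h : Sys n a b c) : ∀ t > 0, 0 < a t - b t := by
  have hn := h.hn
  refine first_zero (fun t => a t - b t) _ (fun t ht => (h.da t ht).sub (h.db t ht)) ?_ ?_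
  · have := h.la.sub h.lb
    refine this.eventually (lt_mem_nhds ?_)
    have : 1 / (2 * (n+1)) < 1 / (2 * n) := one_div_lt_one_div_of_lt (by linarith) (by linarith)
    linarith
  · intro t ht h0
    have hab : a t = b t := by linarith
    have i1 := h.i1 t ht
    have i2 := h.i2 t ht
    have pb := h.pb t ht
    rw [hab] at i1 ⊢
    have : t * (b t * (b t - c t)) = 2 * b t := by linear_combination i2 - i1
    have h3 : 0 < b t * (b t - c t) := by
      by_contra h4
      push Not at h4
      nlinarith
    linarith

lemma dd (h : Sys n a b c) : ∀ t > 0, HasDerivAt (fun t => a t - b t)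
    (a t * (b t - a t) / 2 - b t * (c t - b t) / 2) t :=
  fun t ht => (h.da t ht).sub (h.db t ht)

lemma dz (h : Sys n a b c) : ∀ t > 0, HasDerivAt (fun t => t * (a t - b t))
    ((a t - b t) + t * (a t * (b t - a t) / 2 - b t * (c t - b t) / 2)) t := by
  intro t ht
  have := (hasDerivAt_id t).mul (h.dd t ht)
  refine HasDerivAt.congr_deriv (f := fun t => t * (a t - b t)) this ?_
  simp

lemma tid (_h : Sys n a b c) : Tendsto (fun t : ℝ => t) (nhdsWithin 0 (Ioi 0)) (nhds 0) :=
  (continuous_id.tendsto (0:ℝ)).mono_left nhdsWithin_le_nhds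

lemma zlt (h : Sys n a b c) : ∀ t > 0, t * (a t - b t) < 1 := by
  have hn := h.hn
  have := first_zero (fun t => 1 - t * (a t - b t)) _
    (fun t ht => (h.dz t ht).const_sub 1) ?_ ?_
  · intro t ht
    have := this t ht
    linarith
  · have := (h.tid.mul (h.la.sub h.lb)).const_sub 1
    refine this.eventually (lt_mem_nhds ?_)
    simp
  · intro t ht h0
    have i1 := h.i1 t ht
    have i2 := h.i2 t ht
    have : t * -((a t - b t) + t * (a t * (b t - a t) / 2 - b t * (c t - b t) / 2)) = n - 1 / 2 := by
      linear_combination (1 / 2 - n - a t * t / 2 - t * b t / 2) * h0 + t / 2 * i1 - t / 2 * i2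
    by_contra h4
    push Not at h4
    nlinarith

/-- the function `q`. -/
noncomputable def q (_h : Sys n a b c) (t : ℝ) : ℝ := n + 1 + t * a t - a t / (a t - b t)

noncomputable def E (h : Sys n a b c) (t : ℝ) : ℝ :=
  2 * (t * (a t - b t)) - (t * (a t - b t)) ^ 2 / 2 - h.q t

lemma dz' (h : Sys n a b c) : ∀ t > 0, HasDerivAt (fun t => t * (a t - b t))
    ((a t - b t) * (1 + t * (a t - b t) / 2 - h.q t)) t := by
  intro t ht
  convert h.dz t ht using 1
  have i1 := h.i1 t ht
  have i2 := h.i2 t ht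
  have d := (h.dpos t ht).ne'
  have pb := (h.pb t ht).ne'
  have pa := (h.pa t ht).ne'
  have ht' := ht.ne'
  have e1 : n = (1 - t * a t * b t) / (2 * a t) := by field_simp; linarith
  have e2 : c t = (1 - 2 * (n + 1) * b t) / (t * b t) := by field_simp; linarith
  rw [q, e2, e1]
  field_simp
  ring

lemma dq (h : Sys n a b c) : ∀ t > 0, HasDerivAt h.q
    (a t / (t * (a t - b t)) * h.E t) t := by
  intro t ht
  have d := (h.dpos t ht).ne'
  have := (((hasDerivAt_id t).mul (h.da t ht)).const_add (n + 1)).sub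
    ((h.da t ht).div (h.dd t ht) d)
  refine HasDerivAt.congr_deriv (f := h.q) this ?_
  have i1 := h.i1 t ht
  have i2 := h.i2 t ht
  have pb := (h.pb t ht).ne'
  have pa := (h.pa t ht).ne'
  have ht' := ht.ne'
  have e1 : n = (1 - t * a t * b t) / (2 * a t) := by field_simp; linarith
  have e2 : c t = (1 - 2 * (n + 1) * b t) / (t * b t) := by field_simp; linarith
  simp only [id]
  rw [E, q, e2, e1]
  field_simp
  ring

lemma qeq (h : Sys n a b c) : ∀ t > 0, h.q t =
    t * ((2 * a t - b t) / 2 - b t * (b t - c t) / (2 * (a t - b t))) := by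
  intro t ht
  have i1 := h.i1 t ht
  have i2 := h.i2 t ht
  have d := (h.dpos t ht).ne'
  rw [q]
  field_simp
  linear_combination i2 - i1

lemma lim_aux (h : Sys n a b c) : Tendsto (fun t => (2 * a t - b t) / 2 - b t * (b t - c t) / (2 * (a t - b t)))
    (nhdsWithin 0 (Ioi 0)) (nhds ((2 * (1 / (2 * n)) - (1 / (2 * (n+1)))) / 2 -
      (1 / (2 * (n+1))) * ((1 / (2 * (n+1))) - (1 / (2 * (n+2)))) / (2 * ((1 / (2 * n)) - (1 / (2 * (n+1))))))) := by
  have hn := h.hn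
  refine (((h.la.const_mul 2).sub h.lb).div_const 2).sub ((h.lb.mul (h.lb.sub h.lc)).div ((h.la.sub h.lb).const_mul 2) ?_)
  have : 1 / (2 * (n+1)) < 1 / (2 * n) := one_div_lt_one_div_of_lt (by linarith) (by linarith)
  have : 0 < 2 * (1 / (2 * n) - 1 / (2 * (n+1))) := by linarith
  exact this.ne'

lemma lq0 (h : Sys n a b c) : Tendsto h.q (nhdsWithin 0 (Ioi 0)) (nhds 0) := by
  have := h.tid.mul h.lim_aux
  rw [zero_mul] at this
  refine this.congr' ?_
  filter_upwards [self_mem_nhdsWithin] with t ht using (h.qeq t ht).symm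

lemma Epos (h : Sys n a b c) : ∀ t > 0, 0 < h.E t := by
  have hn := h.hn
  refine first_zero h.E _ (fun t ht => (((h.dz' t ht).const_mul 2).sub
    (((h.dz' t ht).pow 2).div_const 2)).sub (h.dq t ht)) ?_ ?_
  · have h1 := (((h.la.sub h.lb).const_mul 2).sub
      ((h.tid.mul ((h.la.sub h.lb).pow 2)).div_const 2)).sub h.lim_aux
    have h2 := h1.eventually (lt_mem_nhds (a := 0) ?_)
    · filter_upwards [h2, self_mem_nhdsWithin] with t h3 ht
      rw [E, h.qeq t ht]
      have := mul_pos (show 0 < t from ht) h3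
      nlinarith
    · have : (2 * (1 / (2 * n) - 1 / (2 * (n + 1))) - 0 * (1 / (2 * n) - 1 / (2 * (n + 1))) ^ 2 / 2 -
        ((2 * (1 / (2 * n)) - (1 / (2 * (n+1)))) / 2 -
      (1 / (2 * (n+1))) * ((1 / (2 * (n+1))) - (1 / (2 * (n+2)))) / (2 * ((1 / (2 * n)) - (1 / (2 * (n+1)))))))
        = 1 / (n * (n + 1) * (n + 2)) := by
        have h1 : n ≠ 0 := by linarith
        have h2 : n + 1 ≠ 0 := by linarith
        have h3 : n + 2 ≠ 0 := by linarith
        have h4 : (1 / (2 * n)) - (1 / (2 * (n+1))) = 1 / (2 * n * (n+1)) := by field_simp; ring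
        rw [h4]
        field_simp
        ring
      rw [this]
      positivity
  · intro t ht h0
    have hq : h.q t = 2 * (t * (a t - b t)) - (t * (a t - b t)) ^ 2 / 2 := by
      rw [E] at h0; linarith
    simp only [h0, hq]
    have hd := h.dpos t ht
    have hz := h.zlt t ht
    set z := t * (a t - b t)
    have : 0 < (a t - b t) * ((1 - z) * (2 - z) ^ 2 / 2) := by
      have : 0 < 1 - z := by linarith
      have : 0 < 2 - z := by linarith
      positivity
    refine this.trans_eq ?_
    norm_num
    ring

lemma qmono (h : Sys n a b c) : StrictMonoOn h.q (Ioi 0) := by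
  refine strictMonoOn_of_deriv_pos (convex_Ioi 0) (fun t ht =>
    (h.dq t ht).continuousAt.continuousWithinAt) ?_
  intro t ht
  rw [interior_Ioi] at ht
  have ht : 0 < t := ht
  rw [(h.dq t ht).deriv]
  have := h.dpos t ht
  have := h.pa t ht
  have := h.Epos t ht
  positivity

lemma qlt (h : Sys n a b c) : ∀ t > 0, h.q t < 3 / 2 := by
  intro t ht
  have h1 := h.Epos t ht
  have h2 := h.zlt t ht
  rw [E] at h1
  nlinarith [mul_pos (sub_pos.2 h2) (sub_pos.2 h2)]

lemma qpos (h : Sys n a b c) : ∀ t > 0, 0 < h.q t := by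
  intro t ht
  have h1 : h.q (t / 2) < h.q t := h.qmono (half_pos ht) ht (by linarith)
  refine lt_of_le_of_lt ?_ h1
  refine le_of_tendsto h.lq0 ?_
  have : Ioo 0 (t / 2) ∈ nhdsWithin (0:ℝ) (Ioi 0) := Ioo_mem_nhdsGT (by linarith)
  filter_upwards [this] with s hs
  exact (h.qmono hs.1 (half_pos ht) hs.2).le

lemma qsmall (h : Sys n a b c) (e : ℝ) (he : 0 < e) : ∃ t > 0, h.q t < e := by
  have h1 := h.lq0.eventually (gt_mem_nhds he)
  obtain ⟨t, h2, h3⟩ := (h1.and self_mem_nhdsWithin).exists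
  exact ⟨t, h3, h2⟩

lemma wlarge (h : Sys n a b c) (t M : ℝ) (ht : 0 < t) (hM : 0 ≤ M) (hM' : M ^ 2 + 2 * n * M ≤ t) :
    M < t * a t := by
  have hn := h.hn
  have h1 := h.i1 t ht
  have hd := h.dpos t ht
  have pa := h.pa t ht
  have : t < (t * a t) ^ 2 + 2 * n * (t * a t) := by
    have : 0 < t ^ 2 * a t * (a t - b t) := by positivity
    linear_combination this + t * h1
  by_contra h4
  push Not at h4
  have : 0 < t * a t := by positivity
  nlinarith

lemma qlarge (h : Sys n a b c) (L : ℝ) (hL : L < 3 / 2) : ∃ t > 0, L < h.q t := by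
  by_contra hcon
  push Not at hcon
  have hn := h.hn
  obtain ⟨δ, hδ⟩ : ∃ δ, δ = 3 / 2 - L := ⟨_, rfl⟩
  have hδp : 0 < δ := by linarith
  -- choose M
  obtain ⟨M, hM0, hM1, hM2⟩ : ∃ M : ℝ, 0 < M ∧ (n + 1) ≤ δ * M ∧ (n + 1) ≤ 1 / 2 * M := by
    refine ⟨(n + 1) / δ + 2 * (n + 1), by positivity, ?_, ?_⟩
    · rw [mul_add, mul_div_cancel₀ _ hδp.ne']
      have : 0 < δ * (2 * (n + 1)) := by positivity
      linarith
    · have : 0 < (n + 1) / δ := by positivity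
      linarith
  have hT0 : ∃ T0, T0 = M ^ 2 + 2 * n * M := ⟨_, rfl⟩
  obtain ⟨T0, hT0⟩ := hT0
  have hT0p : 0 < T0 := by rw [hT0]; positivity
  have key : ∀ t, T0 ≤ t → δ / 4 ≤ t * ((a t - b t) * (1 + t * (a t - b t) / 2 - h.q t)) := by
    intro t htT
    have ht : 0 < t := by linarith
    have hw := h.wlarge t M ht hM0.le (by linarith)
    have hq := h.qpos t ht
    have hq' := hcon t ht
    have hd := h.dpos t ht
    have hz := h.zlt t ht
    have hzp : 0 < t * (a t - b t) := by positivity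
    have e : t * a t * (1 - t * (a t - b t)) = (n + 1 - h.q t) * (t * (a t - b t)) := by
      rw [q]; field_simp; ring
    rw [← mul_assoc]
    set z := t * (a t - b t)
    have e1 : t * a t * (1 - z) ≤ n + 1 := by
      rw [e]; nlinarith
    have e2 : M * (1 - z) ≤ n + 1 := by nlinarith
    have e3 : 1 - z ≤ δ := by
      by_contra h5; push Not at h5; nlinarith
    have e4 : 1 - z ≤ 1 / 2 := by
      by_contra h5; push Not at h5; nlinarith
    have e5 : δ / 2 ≤ 1 + z / 2 - h.q t := by linarith
    nlinarith
  have hmono : MonotoneOn (fun t => t * (a t - b t) - δ / 4 * Real.log t) (Ici T0) := by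
    have hder : ∀ t, T0 ≤ t → HasDerivAt (fun t => t * (a t - b t) - δ / 4 * Real.log t)
      ((a t - b t) * (1 + t * (a t - b t) / 2 - h.q t) - δ / 4 * t⁻¹) t := fun t ht =>
        (h.dz' t (by linarith)).sub ((Real.hasDerivAt_log (by linarith)).const_mul _)
    refine monotoneOn_of_deriv_nonneg (convex_Ici _) (fun t ht =>
      (hder t ht).continuousAt.continuousWithinAt) ?_ ?_
    · intro t ht
      rw [interior_Ici] at ht
      exact (hder t (le_of_lt ht)).differentiableAt.differentiableWithinAt
    · intro t ht
      rw [interior_Ici] at ht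
      have ht : T0 < t := ht
      have htp : 0 < t := by linarith
      rw [(hder t ht.le).deriv]
      have := key t ht.le
      have : δ / 4 * t⁻¹ ≤ (a t - b t) * (1 + t * (a t - b t) / 2 - h.q t) := by
        rw [← div_eq_mul_inv, div_le_iff₀ htp]; linarith
      linarith
  have hlog := Real.tendsto_log_atTop.eventually_ge_atTop (Real.log T0 + 4 / δ)
  obtain ⟨t, h1, h2⟩ := (hlog.and (eventually_ge_atTop T0)).exists
  have h3 := hmono (mem_Ici.2 le_rfl) (mem_Ici.2 h2) h2
  simp only at h3
  have h4 := h.zlt t (by linarith)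
  have h5 : 0 < T0 * (a T0 - b T0) := mul_pos hT0p (h.dpos T0 hT0p)
  have h6 : δ / 4 * (Real.log T0 + 4 / δ) ≤ δ / 4 * Real.log t := by gcongr
  have h7 : δ / 4 * (4 / δ) = 1 := by field_simp
  linarith

lemma exT (h : Sys n a b c) (l : ℝ) (hl : l ∈ Ioo (1 / 2 : ℝ) 2) : ∃ t > 0, h.q t = 2 - l := by
  obtain ⟨t1, p1, q1⟩ := h.qsmall (2 - l) (by linarith [hl.2])
  obtain ⟨t2, p2, q2⟩ := h.qlarge (2 - l) (by linarith [hl.1])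
  have hpc : IsPreconnected (Ioi (0:ℝ)) := isPreconnected_Ioi
  have := hpc.intermediate_value (mem_Ioi.2 p1) (mem_Ioi.2 p2) (f := h.q)
    (fun t ht => (h.dq t ht).continuousAt.continuousWithinAt) ⟨q1.le, q2.le⟩
  obtain ⟨t, ht, hq⟩ := this
  exact ⟨t, ht, hq⟩

/-- `F_λ`. -/
noncomputable def F (_h : Sys n a b c) (l t : ℝ) : ℝ := t * a t ^ 2 + 2 * (n - 1 + l) * a t

lemma dF (h : Sys n a b c) (l : ℝ) : ∀ t > 0, HasDerivAt (h.F l)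
    (a t * (a t - b t) * (2 - l - h.q t)) t := by
  intro t ht
  have := ((hasDerivAt_id t).mul ((h.da t ht).pow 2)).add ((h.da t ht).const_mul (2 * (n - 1 + l)))
  refine HasDerivAt.congr_deriv (f := h.F l) this ?_
  have d := (h.dpos t ht).ne'
  rw [q]
  simp only [id]
  field_simp
  norm_num
  ring

lemma Fmax (h : Sys n a b c) (l T : ℝ) (hT : 0 < T) (hq : h.q T = 2 - l) :
    ∀ t > 0, t ≠ T → h.F l t < h.F l T := by
  intro t ht hne
  have hsign : ∀ s > 0, 0 < a s * (a s - b s) := fun s hs => mul_pos (h.pa s hs) (h.dpos s hs)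
  rcases lt_or_gt_of_ne hne with hlt | hgt
  · have : StrictMonoOn (h.F l) (Icc t T) := by
      refine strictMonoOn_of_deriv_pos (convex_Icc _ _) (fun s hs =>
        (h.dF l s (lt_of_lt_of_le ht hs.1)).continuousAt.continuousWithinAt) ?_
      intro s hs
      rw [interior_Icc] at hs
      have hs0 : 0 < s := ht.trans hs.1
      rw [(h.dF l s hs0).deriv]
      have : h.q s < h.q T := h.qmono hs0 hT hs.2
      exact mul_pos (hsign s hs0) (by linarith)
    exact this (left_mem_Icc.2 hlt.le) (right_mem_Icc.2 hlt.le) hlt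
  · have : StrictAntiOn (h.F l) (Icc T t) := by
      refine strictAntiOn_of_deriv_neg (convex_Icc _ _) (fun s hs =>
        (h.dF l s (lt_of_lt_of_le hT hs.1)).continuousAt.continuousWithinAt) ?_
      intro s hs
      rw [interior_Icc] at hs
      have hs0 : 0 < s := hT.trans hs.1
      rw [(h.dF l s hs0).deriv]
      have : h.q T < h.q s := h.qmono hT hs0 hs.1
      exact mul_neg_of_pos_of_neg (hsign s hs0) (by linarith)
    exact this (left_mem_Icc.2 hgt.le) (right_mem_Icc.2 hgt.le) hgt

lemma Fbound (h : Sys n a b c) (l t : ℝ) (hl : l ∈ Ioo (1 / 2 : ℝ) 2) (ht : 0 < t) :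
    |h.F l t - 1| ≤ 4 * a t ∧ t * a t ^ 2 ≤ 1 := by
  have hn := h.hn
  have i1 := h.i1 t ht
  have pa := h.pa t ht
  have hd := h.dpos t ht
  have hz := h.zlt t ht
  have e : h.F l t - 1 = a t * (t * (a t - b t)) + 2 * (l - 1) * a t := by
    rw [F]; linear_combination -i1
  have hzp : 0 < t * (a t - b t) := by positivity
  refine ⟨?_, ?_⟩
  · rw [e, abs_le]
    obtain ⟨h1, h2⟩ := hl
    constructor <;> nlinarith
  · nlinarith

end Sys

/-- `φ_μ(t)`, with `I_μ(x) = (x/2)^μ φ_μ(x²)`. -/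
noncomputable def phiB (μ t : ℝ) : ℝ :=
  ∑' k : ℕ, (t / 4) ^ k / ((Nat.factorial k : ℝ) * Real.Gamma ((k : ℝ) + μ + 1))

lemma gam_lb (μ : ℝ) (hμ : 0 ≤ μ) (k : ℕ) : Real.Gamma (μ + 1) ≤ Real.Gamma ((k : ℝ) + μ + 1) := by
  induction k with
  | zero => simp
  | succ k ih =>
    have hk : (0:ℝ) ≤ k := Nat.cast_nonneg k
    have e : ((k + 1 : ℕ) : ℝ) + μ + 1 = ((k : ℝ) + μ + 1) + 1 := by push_cast; ring
    have hne : (k : ℝ) + μ + 1 ≠ 0 := by positivity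
    rw [e, Real.Gamma_add_one hne]
    have : 0 < Real.Gamma ((k : ℝ) + μ + 1) := Real.Gamma_pos_of_pos (by positivity)
    nlinarith

lemma term_bound (μ : ℝ) (hμ : 0 ≤ μ) (t R : ℝ) (ht : |t| ≤ R) (k : ℕ) :
    ‖(t / 4) ^ k / ((Nat.factorial k : ℝ) * Real.Gamma ((k : ℝ) + μ + 1))‖ ≤
      (R / 4) ^ k / (Nat.factorial k : ℝ) * (Real.Gamma (μ + 1))⁻¹ := by
  have h0 : 0 < Real.Gamma (μ + 1) := Real.Gamma_pos_of_pos (by linarith)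
  have h1 := gam_lb μ hμ k
  have h2 : 0 < Real.Gamma ((k : ℝ) + μ + 1) := by linarith
  have h3 : (0:ℝ) < Nat.factorial k := by positivity
  have hR : 0 ≤ R := (abs_nonneg t).trans ht
  rw [norm_div, norm_pow, norm_mul, Real.norm_eq_abs, Real.norm_eq_abs, Real.norm_eq_abs,
    abs_of_pos h2, abs_of_pos h3, abs_div, abs_of_pos (show (0:ℝ) < 4 by norm_num),
    ← div_div, ← div_eq_mul_inv]
  gcongr

lemma bound_summable (μ R : ℝ) :
    Summable (fun k : ℕ => (R / 4) ^ k / (Nat.factorial k : ℝ) * (Real.Gamma (μ + 1))⁻¹) :=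
  (Real.summable_pow_div_factorial (R / 4)).mul_right _

lemma phi_summable (μ : ℝ) (hμ : 0 ≤ μ) (t : ℝ) :
    Summable (fun k : ℕ => (t / 4) ^ k / ((Nat.factorial k : ℝ) * Real.Gamma ((k : ℝ) + μ + 1))) :=
  Summable.of_norm_bounded (bound_summable μ |t|) (term_bound μ hμ t |t| le_rfl)

/-- the series weighted by `k`. -/
lemma phi_k_hasSum (μ : ℝ) (hμ : 0 ≤ μ) (t : ℝ) :
    HasSum (fun k : ℕ => (k : ℝ) * ((t / 4) ^ (k - 1) / ((Nat.factorial k : ℝ) * Real.Gamma ((k : ℝ) + μ + 1))))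
      (phiB (μ + 1) t) := by
  rw [← hasSum_nat_add_iff' 1]
  simp only [Finset.range_one, Finset.sum_singleton, Nat.cast_zero, zero_mul, sub_zero]
  have := (phi_summable (μ + 1) (by linarith) t).hasSum
  refine Eq.subst (motive := fun f => HasSum f (phiB (μ + 1) t)) (funext fun k => ?_) this
  symm
  have e : ((k + 1 : ℕ) : ℝ) + μ + 1 = (k : ℝ) + (μ + 1) + 1 := by push_cast; ring
  have h1 : Real.Gamma ((k : ℝ) + (μ + 1) + 1) ≠ 0 :=
    (Real.Gamma_pos_of_pos (by positivity)).ne'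
  have h2 : (Nat.factorial k : ℝ) ≠ 0 := by positivity
  have h3 : (k : ℝ) + 1 ≠ 0 := by positivity
  rw [e, Nat.add_sub_cancel, Nat.factorial_succ]
  push_cast
  field_simp

lemma phi_hasDerivAt (μ : ℝ) (hμ : 0 ≤ μ) (t : ℝ) :
    HasDerivAt (phiB μ) (phiB (μ + 1) t / 4) t := by
  have hR : t ∈ Metric.ball (0:ℝ) (|t| + 1) := by simp
  have := hasDerivAt_tsum_of_isPreconnected
    (g := fun (k : ℕ) (t : ℝ) => (t / 4) ^ k / ((Nat.factorial k : ℝ) * Real.Gamma ((k : ℝ) + μ + 1)))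
    (g' := fun (k : ℕ) (t : ℝ) => ((k : ℝ) * ((t / 4) ^ (k - 1) / ((Nat.factorial k : ℝ) * Real.Gamma ((k : ℝ) + μ + 1)))) / 4)
    (u := fun k : ℕ => ((k : ℝ) * (((|t| + 1) / 4) ^ (k - 1) / ((Nat.factorial k : ℝ) * Real.Gamma ((k : ℝ) + μ + 1)))) / 4)
    ((phi_k_hasSum μ hμ (|t| + 1)).summable.div_const 4)
    Metric.isOpen_ball (convex_ball (0:ℝ) (|t| + 1)).isPreconnected ?_ ?_ hR (phi_summable μ hμ t) hR
  · rw [tsum_div_const, (phi_k_hasSum μ hμ t).tsum_eq] at this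
    exact this
  · intro k y _
    have := (((hasDerivAt_id y).div_const 4).pow k).div_const ((Nat.factorial k : ℝ) * Real.Gamma ((k : ℝ) + μ + 1))
    refine HasDerivAt.congr_deriv (f := fun (t : ℝ) => (t / 4) ^ k / ((Nat.factorial k : ℝ) * Real.Gamma ((k : ℝ) + μ + 1))) this ?_
    simp only [id]
    ring
  · intro k y hy
    have hy : |y| < |t| + 1 := by simpa using hy
    have h2 : 0 < Real.Gamma ((k : ℝ) + μ + 1) := Real.Gamma_pos_of_pos (by positivity)
    rw [norm_div, norm_mul, norm_div, norm_pow, norm_mul]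
    simp only [Real.norm_eq_abs, abs_div, abs_of_pos h2, Nat.abs_cast]
    rw [abs_of_pos (show (0:ℝ) < 4 by norm_num)]
    gcongr

lemma phi_pos (μ : ℝ) (hμ : 0 ≤ μ) (t : ℝ) (ht : 0 ≤ t) : 0 < phiB μ t := by
  have hp : ∀ k : ℕ, 0 < Real.Gamma ((k : ℝ) + μ + 1) := fun k => Real.Gamma_pos_of_pos (by positivity)
  refine (phi_summable μ hμ t).tsum_pos (fun k => ?_) 0 ?_
  · have := hp k
    positivity
  · have := hp 0
    rw [pow_zero]
    positivity

lemma phi_rec (ν : ℝ) (hν : 0 ≤ ν) (t : ℝ) :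
    phiB (ν - 1) t = ν * phiB ν t + t / 4 * phiB (ν + 1) t := by
  have h1 := ((phi_summable ν hν t).hasSum.mul_left ν).add ((phi_k_hasSum ν hν t).mul_left (t / 4))
  refine Eq.trans ?_ h1.tsum_eq
  refine tsum_congr fun k => ?_
  have e : t / 4 * ((k : ℝ) * ((t / 4) ^ (k - 1) / ((Nat.factorial k : ℝ) * Real.Gamma ((k : ℝ) + ν + 1))))
      = k * ((t / 4) ^ k / ((Nat.factorial k : ℝ) * Real.Gamma ((k : ℝ) + ν + 1))) := by
    rcases k with _ | k
    · simp
    · rw [Nat.add_sub_cancel, pow_succ]; ring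
  rw [e, ← add_mul]
  have e2 : (k : ℝ) + (ν - 1) + 1 = k + ν := by ring
  rw [e2]
  by_cases h0 : (k : ℝ) + ν = 0
  · rw [h0, add_comm ν, h0]; simp [Real.Gamma_zero]
  · rw [Real.Gamma_add_one h0]
    by_cases hG : Real.Gamma ((k : ℝ) + ν) = 0
    · simp [hG]
    · have : ν + (k : ℝ) ≠ 0 := by rwa [add_comm]
      field_simp
      ring

/-- half ratio -/
noncomputable def aF (μ t : ℝ) : ℝ := phiB (μ + 1) t / (2 * phiB μ t)

lemma aF_pos (μ : ℝ) (hμ : 0 ≤ μ) (t : ℝ) (ht : 0 ≤ t) : 0 < aF μ t := by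
  have := phi_pos μ hμ t ht
  have := phi_pos (μ + 1) (by linarith) t ht
  rw [aF]; positivity

lemma aF_deriv (μ : ℝ) (hμ : 0 ≤ μ) (t : ℝ) (ht : 0 ≤ t) :
    HasDerivAt (aF μ) (aF μ t * (aF (μ + 1) t - aF μ t) / 2) t := by
  have h0 := phi_pos μ hμ t ht
  have h1 := phi_pos (μ + 1) (by linarith) t ht
  have := (phi_hasDerivAt (μ + 1) (by linarith) t).div ((phi_hasDerivAt μ hμ t).const_mul 2) (by positivity)
  refine HasDerivAt.congr_deriv (f := aF μ) this ?_
  rw [aF, aF]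
  field_simp
  ring

lemma aF_rec (μ : ℝ) (hμ : 0 ≤ μ) (t : ℝ) (ht : 0 ≤ t) :
    1 = 2 * (μ + 1) * aF μ t + t * aF μ t * aF (μ + 1) t := by
  have h0 := phi_pos μ hμ t ht
  have h1 := phi_pos (μ + 1) (by linarith) t ht
  have h := phi_rec (μ + 1) (by linarith) t
  rw [add_sub_cancel_right] at h
  rw [aF, aF]
  field_simp
  linarith

lemma aF_lim (μ : ℝ) (hμ : 0 ≤ μ) :
    Tendsto (aF μ) (nhdsWithin 0 (Ioi 0)) (nhds (1 / (2 * (μ + 1)))) := by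
  have h : 1 / (2 * (μ + 1)) = aF μ 0 := by
    have := aF_rec μ hμ 0 le_rfl
    field_simp
    linarith
  rw [h]
  exact (aF_deriv μ hμ 0 le_rfl).continuousAt.continuousWithinAt

lemma bessel_sys (ν : ℝ) (hν : 0 ≤ ν) : Sys (ν + 1) (aF ν) (aF (ν + 1)) (aF (ν + 1 + 1)) where
  hn := by linarith
  pa t ht := aF_pos ν hν t (le_of_lt ht)
  pb t ht := aF_pos (ν + 1) (by linarith) t (le_of_lt ht)
  da t ht := aF_deriv ν hν t (le_of_lt ht)
  db t ht := aF_deriv (ν + 1) (by linarith) t (le_of_lt ht)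
  i1 t ht := aF_rec ν hν t (le_of_lt ht)
  i2 t ht := aF_rec (ν + 1) (by linarith) t (le_of_lt ht)
  la := aF_lim ν hν
  lb := aF_lim (ν + 1) (by linarith)
  lc := by
    have := aF_lim (ν + 1 + 1) (by linarith)
    rwa [show ν + 1 + 1 + 1 = ν + 1 + 2 by ring] at this

lemma bessel_eq (μ x : ℝ) (hx : 0 < x) : besselI μ x = (x / 2) ^ μ * phiB μ (x ^ 2) := by
  rw [besselI, phiB, ← tsum_mul_left]
  refine tsum_congr fun k => ?_
  have hx2 : 0 < x / 2 := by linarith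
  rw [Real.rpow_add hx2, mul_comm (2:ℝ) (k:ℝ), mul_comm (k:ℝ) 2, Real.rpow_mul hx2.le, Real.rpow_natCast,
    show ((x / 2) ^ (2:ℝ)) = x ^ 2 / 4 by rw [Real.rpow_two]; ring]
  ring

lemma ratio_eq (ν : ℝ) (hν : 0 ≤ ν) (x : ℝ) (hx : 0 < x) :
    ratioI ν x = (2 * ν + x ^ 2 * aF ν (x ^ 2)) / x := by
  have hx2 : 0 < x / 2 := by linarith
  have h0 := phi_pos ν hν (x ^ 2) (by positivity)
  rw [ratioI, bessel_eq _ _ hx, bessel_eq _ _ hx, phi_rec ν hν, aF, Real.rpow_sub_one hx2.ne']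
  have : 0 < (x / 2) ^ ν := Real.rpow_pos_of_pos hx2 ν
  field_simp
  ring

lemma le_iff (ν : ℝ) (hν : 0 ≤ ν) (l C x : ℝ) (hl : 0 < l) (hC : 0 < C) (hx : 0 < x) :
    (ratioI ν x ≤ upI ν l C x ↔ (bessel_sys ν hν).F l (x ^ 2) ≤ C) ∧
    (ratioI ν x = upI ν l C x ↔ (bessel_sys ν hν).F l (x ^ 2) = C) := by
  have ha := aF_pos ν hν (x ^ 2) (by positivity)
  rw [ratio_eq ν hν x hx, upI, Sys.F, div_le_div_iff_of_pos_right hx, div_left_inj' hx.ne']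
  set w := aF ν (x ^ 2)
  have e1 : (2 * ν + x ^ 2 * w ≤ ν - l + √((ν + l) ^ 2 + C * x ^ 2)) ↔
    x ^ 2 * w + (ν + l) ≤ √((ν + l) ^ 2 + C * x ^ 2) := by constructor <;> intro h <;> linarith
  have e2 : (2 * ν + x ^ 2 * w = ν - l + √((ν + l) ^ 2 + C * x ^ 2)) ↔
    √((ν + l) ^ 2 + C * x ^ 2) = x ^ 2 * w + (ν + l) := by constructor <;> intro h <;> linarith
  have hx2 : 0 < x ^ 2 := by positivity
  rw [e1, e2, Real.le_sqrt' (by positivity), Real.sqrt_eq_iff_mul_self_eq (by positivity) (by positivity)]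
  have e3 : (x ^ 2 * w + (ν + l)) ^ 2 - ((ν + l) ^ 2 + C * x ^ 2)
    = x ^ 2 * ((x ^ 2 * w ^ 2 + 2 * (ν + 1 - 1 + l) * w) - C) := by ring
  set f := (x ^ 2 * w ^ 2 + 2 * (ν + 1 - 1 + l) * w)
  constructor
  · constructor
    · intro h
      by_contra h'
      push Not at h'
      have := mul_pos hx2 (sub_pos.2 h')
      linarith
    · intro h
      have := mul_nonneg hx2.le (sub_nonneg.2 h)
      linarith
  · constructor
    · intro h
      have : x ^ 2 * (f - C) = 0 := by rw [← e3, h]; ring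
      rcases mul_eq_zero.1 this with h | h
      · exact absurd h hx2.ne'
      · linarith
    · intro h
      rw [h] at e3
      linarith

lemma tangent_deriv (ν : ℝ) (hν : 0 ≤ ν) (l C x : ℝ) (hl : 0 < l) (hC : 0 < C) (hx : 0 < x)
    (hle : ∀ x > 0, ratioI ν x ≤ upI ν l C x) (heq : ratioI ν x = upI ν l C x) :
    deriv (ratioI ν) x = deriv (upI ν l C) x := by
  have hd1 : DifferentiableAt ℝ (ratioI ν) x := by
    have h1 : DifferentiableAt ℝ (fun x => (2 * ν + x ^ 2 * aF ν (x ^ 2)) / x) x := by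
      have h2 : DifferentiableAt ℝ (aF ν) (x ^ 2) :=
        (aF_deriv ν hν (x ^ 2) (by positivity)).differentiableAt
      have h3 : DifferentiableAt ℝ (fun x => aF ν (x ^ 2)) x :=
        DifferentiableAt.comp (g := aF ν) (f := fun x : ℝ => x ^ 2) x h2 (by fun_prop)
      have := hx.ne'
      fun_prop (disch := assumption)
    refine h1.congr_of_eventuallyEq ?_
    filter_upwards [lt_mem_nhds hx] with y hy using ratio_eq ν hν y hy
  have hd2 : DifferentiableAt ℝ (upI ν l C) x := by
    have h0 : (ν + l) ^ 2 + C * x ^ 2 ≠ 0 := by positivity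
    have := hx.ne'
    unfold upI
    fun_prop (disch := assumption)
  have hmin : IsLocalMin (fun y => upI ν l C y - ratioI ν y) x := by
    filter_upwards [lt_mem_nhds hx] with y hy
    have := hle y hy
    linarith
  have := hmin.deriv_eq_zero
  rw [deriv_fun_sub hd2 hd1] at this
  linarith

theorem best_upper_bound_I (ν : ℝ) (hν : 0 ≤ ν) :
    (∀ lam ∈ Ioo (1 / 2 : ℝ) 2,
      (∃! C : ℝ, TouchesAboveI ν lam C) ∧
      (∀ C : ℝ, TouchesAboveI ν lam C → ∃ xs : ℝ, TangentAboveI ν lam C xs)) ∧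
    (∃ C X : ℝ → ℝ,
      (∀ lam ∈ Ioo (1 / 2 : ℝ) 2,
        TouchesAboveI ν lam (C lam) ∧ TangentAboveI ν lam (C lam) (X lam)) ∧
      StrictMonoOn C (Ioo (1 / 2 : ℝ) 2) ∧
      StrictAntiOn X (Ioo (1 / 2 : ℝ) 2) ∧
      Tendsto C (nhdsWithin (1 / 2) (Ioi (1 / 2))) (nhds 1) ∧
      Tendsto C (nhdsWithin 2 (Iio 2)) (nhds ((ν + 2) / (ν + 1))) ∧
      Tendsto X (nhdsWithin (1 / 2) (Ioi (1 / 2))) atTop ∧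
      Tendsto X (nhdsWithin 2 (Iio 2)) (nhds 0)) := by
  have hS := bessel_sys ν hν
  have hex := hS.exT
  choose! T hTp hTq using hex
  have hlpos : ∀ l ∈ Ioo (1 / 2 : ℝ) 2, 0 < l := fun l hl => by linarith [hl.1]
  have hFpos : ∀ l ∈ Ioo (1 / 2 : ℝ) 2, 0 < hS.F l (T l) := by
    intro l hl
    have h1 := hlpos l hl
    have h2 := hTp l hl
    have h3 := aF_pos ν hν (T l) h2.le
    have h4 : 0 < ν + 1 - 1 + l := by linarith
    rw [Sys.F]
    positivity
  have hFle : ∀ l ∈ Ioo (1 / 2 : ℝ) 2, ∀ t > 0, hS.F l t ≤ hS.F l (T l) := by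
    intro l hl t ht
    by_cases h : t = T l
    · rw [h]
    · exact (hS.Fmax l (T l) (hTp l hl) (hTq l hl) t ht h).le
  have hXp : ∀ l ∈ Ioo (1 / 2 : ℝ) 2, 0 < √(T l) := fun l hl => Real.sqrt_pos.2 (hTp l hl)
  have hX2 : ∀ l ∈ Ioo (1 / 2 : ℝ) 2, √(T l) ^ 2 = T l := fun l hl => Real.sq_sqrt (hTp l hl).le
  have hTouch : ∀ l ∈ Ioo (1 / 2 : ℝ) 2, TouchesAboveI ν l (hS.F l (T l)) := by
    intro l hl
    refine ⟨hFpos l hl, fun x hx => ?_, √(T l), hXp l hl, ?_⟩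
    · rw [(le_iff ν hν l _ x (hlpos l hl) (hFpos l hl) hx).1]
      exact hFle l hl _ (by positivity)
    · rw [(le_iff ν hν l _ _ (hlpos l hl) (hFpos l hl) (hXp l hl)).2, hX2 l hl]
  have hTangent : ∀ l ∈ Ioo (1 / 2 : ℝ) 2, TangentAboveI ν l (hS.F l (T l)) √(T l) := by
    intro l hl
    have heq : ratioI ν √(T l) = upI ν l (hS.F l (T l)) √(T l) := by
      rw [(le_iff ν hν l _ _ (hlpos l hl) (hFpos l hl) (hXp l hl)).2, hX2 l hl]
    refine ⟨hXp l hl, heq, ?_, ?_⟩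
    · intro x hx h
      rw [(le_iff ν hν l _ x (hlpos l hl) (hFpos l hl) hx).2] at h
      have hx2 : x ^ 2 = T l := by
        by_contra hne
        have := hS.Fmax l (T l) (hTp l hl) (hTq l hl) (x ^ 2) (by positivity) hne
        linarith
      rw [← hx2, Real.sqrt_sq hx.le]
    · exact tangent_deriv ν hν l _ _ (hlpos l hl) (hFpos l hl) (hXp l hl) (hTouch l hl).2.1 heq
  have hUniq : ∀ l ∈ Ioo (1 / 2 : ℝ) 2, ∀ C, TouchesAboveI ν l C → C = hS.F l (T l) := by
    intro l hl C hC
    obtain ⟨hC0, hCle, x, hx, hCx⟩ := hC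
    rw [(le_iff ν hν l _ x (hlpos l hl) hC0 hx).2] at hCx
    have h1 := hCle _ (hXp l hl)
    rw [(le_iff ν hν l _ _ (hlpos l hl) hC0 (hXp l hl)).1, hX2 l hl] at h1
    have h2 := hFle l hl (x ^ 2) (by positivity)
    linarith
  have hTanti : ∀ l ∈ Ioo (1 / 2 : ℝ) 2, ∀ t > 0, (2 - l < hS.q t → T l < t) ∧ (hS.q t < 2 - l → t < T l) := by
    intro l hl t ht
    have h1 := hTq l hl
    constructor
    · intro h
      rw [← h1] at h
      exact (hS.qmono.lt_iff_lt (hTp l hl) ht).1 h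
    · intro h
      rw [← h1] at h
      exact (hS.qmono.lt_iff_lt ht (hTp l hl)).1 h
  have hIoo1 : Ioo (1 / 2 : ℝ) 2 ∈ nhdsWithin (1 / 2 : ℝ) (Ioi (1 / 2)) := Ioo_mem_nhdsGT (by norm_num)
  have hIoo2 : Ioo (1 / 2 : ℝ) 2 ∈ nhdsWithin (2 : ℝ) (Iio 2) := Ioo_mem_nhdsLT (by norm_num)
  have hXinf : Tendsto (fun l => √(T l)) (nhdsWithin (1 / 2) (Ioi (1 / 2))) atTop := by
    refine Real.tendsto_sqrt_atTop.comp ?_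
    rw [tendsto_atTop]
    intro M
    have hM : 0 < max M 1 := by positivity
    have hq := hS.qlt _ hM
    have : Iio (2 - hS.q (max M 1)) ∈ nhdsWithin (1 / 2 : ℝ) (Ioi (1 / 2)) :=
      mem_nhdsWithin_of_mem_nhds (Iio_mem_nhds (by linarith))
    filter_upwards [hIoo1, this] with l hl hl2
    have hl2 : l < 2 - hS.q (max M 1) := hl2
    have := (hTanti l hl _ hM).2 (by linarith)
    exact (le_max_left _ _).trans this.le
  have hT0 : Tendsto T (nhdsWithin 2 (Iio 2)) (nhdsWithin 0 (Ioi 0)) := by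
    refine tendsto_nhdsWithin_iff.2 ⟨?_, ?_⟩
    · rw [tendsto_order]
      refine ⟨fun e he => ?_, fun e he => ?_⟩
      · filter_upwards [hIoo2] with l hl
        exact he.trans (hTp l hl)
      · have hq := hS.qpos e he
        have : Ioi (2 - hS.q e) ∈ nhdsWithin (2 : ℝ) (Iio 2) :=
          mem_nhdsWithin_of_mem_nhds (Ioi_mem_nhds (by linarith))
        filter_upwards [hIoo2, this] with l hl hl2
        have hl2 : 2 - hS.q e < l := hl2
        exact (hTanti l hl e he).1 (by linarith)
    · filter_upwards [hIoo2] with l hl using hTp l hl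
  refine ⟨fun l hl => ⟨⟨_, hTouch l hl, hUniq l hl⟩, fun C hC => ⟨√(T l), ?_⟩⟩,
    fun l => hS.F l (T l), fun l => √(T l), fun l hl => ⟨hTouch l hl, hTangent l hl⟩,
    ?_, ?_, ?_, ?_, hXinf, ?_⟩
  · rw [hUniq l hl C hC]
    exact hTangent l hl
  · intro l1 h1 l2 h2 hlt
    refine lt_of_lt_of_le ?_ (hFle l2 h2 (T l1) (hTp l1 h1))
    have := aF_pos ν hν (T l1) (hTp l1 h1).le
    simp only [Sys.F]
    gcongr
  · intro l1 h1 l2 h2 hlt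
    refine Real.sqrt_lt_sqrt (hTp l2 h2).le ?_
    refine (hTanti l2 h2 _ (hTp l1 h1)).1 ?_
    rw [hTq l1 h1]
    linarith
  · have hlim : Tendsto (fun l => 4 * (√(T l))⁻¹) (nhdsWithin (1 / 2) (Ioi (1 / 2))) (nhds 0) := by
      have := (tendsto_inv_atTop_zero.comp hXinf).const_mul 4
      rwa [mul_zero] at this
    rw [tendsto_iff_norm_sub_tendsto_zero]
    refine squeeze_zero' (Eventually.of_forall fun _ => norm_nonneg _) ?_ hlim
    filter_upwards [hIoo1] with l hl
    obtain ⟨h1, h2⟩ := hS.Fbound l (T l) hl (hTp l hl)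
    rw [Real.norm_eq_abs]
    refine h1.trans ?_
    have h3 := hXp l hl
    have h4 := aF_pos ν hν (T l) (hTp l hl).le
    have h5 : aF ν (T l) ≤ (√(T l))⁻¹ := by
      rw [← one_div, le_div_iff₀ h3]
      refine abs_le_one_iff_mul_self_le_one.2 ?_ |> (le_abs_self _).trans
      have := hX2 l hl
      nlinarith
    linarith
  · have hl : Tendsto (fun l : ℝ => l) (nhdsWithin 2 (Iio 2)) (nhds 2) :=
      (continuous_id.tendsto (2:ℝ)).mono_left nhdsWithin_le_nhds
    have ha := (aF_lim ν hν).comp hT0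
    have hT := tendsto_nhds_of_tendsto_nhdsWithin hT0
    have := (hT.mul (ha.pow 2)).add (((hl.const_add (ν + 1 - 1)).const_mul 2).mul ha)
    have e : 0 * (1 / (2 * (ν + 1))) ^ 2 + 2 * (ν + 1 - 1 + 2) * (1 / (2 * (ν + 1))) = (ν + 2) / (ν + 1) := by
      field_simp
      ring
    rw [e] at this
    exact this
  · have := (Real.continuous_sqrt.tendsto 0).comp (tendsto_nhds_of_tendsto_nhdsWithin hT0)
    rwa [Real.sqrt_zero] at this
end
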